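/- arXiv:2001.01657 — 3 statements merged into one kernel-verified Lean document; each statement's English description precedes it below -/
import Mathlib

section
/- Let Ω₁, Ω₂ be open subsets of ℝⁿ and let f be a homeomorphism of Ω₁ onto Ω₂ such that the composition operator T_f(u) = u∘f maps C₀(Ω₂) ∩ BV(Ω₂) into BV(Ω₁). Then f ∈ BV_loc(Ω₁, Ω₂) and there exists a constant K > 0 such that |Df|(f⁻¹(A)) ≤ K·Lⁿ(A) for all Borel sets A ⊆ Ω₂. -/
open MeasureTheory Metric Set Filter
open scoped ENNReal Topology NNReal

noncomputable section

/-- `ℝⁿ` as a Euclidean space. -/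
abbrev En (n : ℕ) : Type := EuclideanSpace ℝ (Fin n)

/-- A smooth test function compactly supported inside the set `Ω`. -/
def SmoothTest {n : ℕ} (Ω : Set (En n)) (φ : En n → ℝ) : Prop :=
  ContDiff ℝ (⊤ : ℕ∞) φ ∧ HasCompactSupport φ ∧ tsupport φ ⊆ Ω

/-- Frobenius norm of an `m × n` array of reals. -/
def frobNorm {m n : ℕ} (M : Fin m → Fin n → ℝ) : ℝ :=
  Real.sqrt (∑ j, ∑ i, M j i ^ 2)

/-- `Df = σ ⬝ ν` is the polar decomposition of the distributional derivative of the
mapping `f : Ω → ℝᵐ`: `σ` is a matrix field of unit Frobenius norm `ν`-a.e., `ν` is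
carried by `Ω`, and the integration-by-parts formula holds against all smooth test
functions compactly supported in `Ω`.  In particular `ν = |Df|` is the total variation
measure of `Df` on `Ω`. -/
def IsVariationMeasure {n m : ℕ} (Ω : Set (En n)) (f : En n → En m)
    (σ : En n → Fin m → Fin n → ℝ) (ν : Measure (En n)) : Prop :=
  Measurable σ ∧ (∀ᵐ x ∂ν, frobNorm (σ x) = 1) ∧ ν Ωᶜ = 0 ∧
    ∀ φ : En n → ℝ, SmoothTest Ω φ → ∀ (j : Fin m) (i : Fin n),
      ∫ x in Ω, f x j * fderiv ℝ φ x (EuclideanSpace.single i 1) ∂volume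
        = - ∫ x, φ x * σ x j i ∂ν

/-- `f ∈ BV(Ω, ℝᵐ)` with total variation measure `ν`. -/
def MemBV {n m : ℕ} (Ω : Set (En n)) (f : En n → En m) (ν : Measure (En n)) : Prop :=
  IntegrableOn f Ω volume ∧ ν Ω < ⊤ ∧ ∃ σ, IsVariationMeasure Ω f σ ν

/-- `f ∈ BV_loc(Ω, ℝᵐ)` with total variation measure `ν`, finite on compact subsets of `Ω`. -/
def MemBVloc {n m : ℕ} (Ω : Set (En n)) (f : En n → En m) (ν : Measure (En n)) : Prop :=
  LocallyIntegrableOn f Ω volume ∧ (∀ C : Set (En n), IsCompact C → C ⊆ Ω → ν C < ⊤) ∧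
    ∃ σ, IsVariationMeasure Ω f σ ν

/-- Scalar version of `IsVariationMeasure`: `Du = σ ⬝ ν` with `|σ| = 1` `ν`-a.e. -/
def IsVariationMeasureS {n : ℕ} (Ω : Set (En n)) (u : En n → ℝ)
    (σ : En n → Fin n → ℝ) (ν : Measure (En n)) : Prop :=
  Measurable σ ∧ (∀ᵐ x ∂ν, Real.sqrt (∑ i, σ x i ^ 2) = 1) ∧ ν Ωᶜ = 0 ∧
    ∀ φ : En n → ℝ, SmoothTest Ω φ → ∀ i : Fin n,
      ∫ x in Ω, u x * fderiv ℝ φ x (EuclideanSpace.single i 1) ∂volume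
        = - ∫ x, φ x * σ x i ∂ν

/-- `u ∈ BV(Ω)` with total variation measure `ν`. -/
def MemBVs {n : ℕ} (Ω : Set (En n)) (u : En n → ℝ) (ν : Measure (En n)) : Prop :=
  IntegrableOn u Ω volume ∧ ν Ω < ⊤ ∧ ∃ σ, IsVariationMeasureS Ω u σ ν

/-- `u ∈ BV_loc(Ω)` with total variation measure `ν`. -/
def MemBVlocs {n : ℕ} (Ω : Set (En n)) (u : En n → ℝ) (ν : Measure (En n)) : Prop :=
  LocallyIntegrableOn u Ω volume ∧ (∀ C : Set (En n), IsCompact C → C ⊆ Ω → ν C < ⊤) ∧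
    ∃ σ, IsVariationMeasureS Ω u σ ν

/-- `z` is the approximate limit of `f` at `x`. -/
def ApproxLimAt {n m : ℕ} (f : En n → En m) (x : En n) (z : En m) : Prop :=
  Tendsto (fun r : ℝ =>
      (∫ y in Metric.ball x r, ‖f y - z‖ ∂volume) / (volume (Metric.ball x r)).toReal)
    (nhdsWithin 0 (Set.Ioi 0)) (nhds 0)

/-- `f̃⁻¹(A)`: the preimage of `A` under the precise representative (approximate limit)
of `f`; a point belongs to it iff the approximate limit of `f` exists there and lies in `A`. -/
def tildePreimage {n m : ℕ} (f : En n → En m) (A : Set (En m)) : Set (En n) :=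
  {x | ∃ z ∈ A, ApproxLimAt f x z}

/-- `f` has no jump part: its variation measure does not charge the approximate
discontinuity set of `f`. -/
def NoJumpPart {n m : ℕ} (f : En n → En m) (ν : Measure (En n)) : Prop :=
  ν {x | ¬ ∃ z, ApproxLimAt f x z} = 0

/-- `f` is a homeomorphism of `Ω₁` onto `Ω₂`, with inverse `g`. -/
def IsHomeoOn {n : ℕ} (f g : En n → En n) (Ω₁ Ω₂ : Set (En n)) : Prop :=
  ContinuousOn f Ω₁ ∧ ContinuousOn g Ω₂ ∧ MapsTo f Ω₁ Ω₂ ∧ MapsTo g Ω₂ Ω₁ ∧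
    (∀ x ∈ Ω₁, g (f x) = x) ∧ (∀ y ∈ Ω₂, f (g y) = y)

/-- `u ∈ C₀(Ω)`: continuous on `Ω` and vanishing at the boundary of `Ω`. -/
def MemCZero {n : ℕ} (Ω : Set (En n)) (u : En n → ℝ) : Prop :=
  ContinuousOn u Ω ∧ ∀ ε : ℝ, 0 < ε → ∃ C : Set (En n), IsCompact C ∧ C ⊆ Ω ∧
    ∀ x ∈ Ω \ C, |u x| ≤ ε

/-!
A gliding hump argument over `ℓ¹`-combinations of test functions makes `T_f` bounded: the variation
of `u ∘ f` is at most `C (‖u‖_∞ + ‖u‖₁ + ‖∇u‖₁)`.  For a linear form `p` with `‖p‖ ≤ 1` and a test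
function `η`, apply this to `u = k⁻¹ cos (k p) η` and `u = k⁻¹ sin (k p) η`: as `k → ∞` all terms of
the right-hand side vanish except `∫ |∇p| |η| ≤ ∫ |η|`.  Since
`cos (k W) D(k⁻¹ sin (k W) Z) - sin (k W) D(k⁻¹ cos (k W) Z) = Z DW` for `W = p ∘ f`, `Z = η ∘ f`,
this gives `|∫ φ D(p ∘ f)| ≤ 2 C ∫ |φ ∘ f⁻¹|` for every test function `φ`, so by duality with `L¹`
the measure `Df` has a bounded density with respect to the pullback of Lebesgue measure by `f`.
-/

section DualOfL1

variable {α : Type*} {mα : MeasurableSpace α} {μ : Measure α}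

lemma exists_extension_of_forall_abs_le {V E : Type*} [AddCommGroup V] [Module ℝ V]
    [NormedAddCommGroup E] [NormedSpace ℝ E] (T : V →ₗ[ℝ] E) (L : V →ₗ[ℝ] ℝ) {K : ℝ}
    (hK : 0 ≤ K) (hL : ∀ v, |L v| ≤ K * ‖T v‖) :
    ∃ Λ : E →L[ℝ] ℝ, ‖Λ‖ ≤ K ∧ ∀ v, Λ (T v) = L v := by
  have hker : T.ker ≤ L.ker := fun v hv ↦ by
    simpa [LinearMap.mem_ker.1 hv] using hL v
  let L₀ : T.range →ₗ[ℝ] ℝ := T.ker.liftQ L hker ∘ₗ T.quotKerEquivRange.symm.toLinearMap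
  have hL₀ (v : V) : L₀ ⟨T v, T.mem_range_self v⟩ = L v := by
    simp [L₀, LinearMap.quotKerEquivRange_symm_apply_image]
  have hbound : ∀ y, ‖L₀ y‖ ≤ K * ‖y‖ := by
    rintro ⟨_, v, rfl⟩
    simpa [hL₀] using hL v
  obtain ⟨Λ, hΛ, hnorm⟩ := exists_extension_norm_eq T.range (L₀.mkContinuous K hbound)
  exact ⟨Λ, hnorm ▸ L₀.mkContinuous_norm_le hK hbound,
    fun v ↦ (hΛ ⟨T v, T.mem_range_self v⟩).trans (hL₀ v)⟩

lemma exists_Lp_two_density [IsFiniteMeasure μ] (Λ : Lp ℝ 1 μ →L[ℝ] ℝ) :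
    ∃ h : Lp ℝ 2 μ, ∀ s (hs : MeasurableSet s) (c : ℝ),
      Λ (indicatorConstLp 1 hs (measure_ne_top μ s) c) = c * ∫ x in s, h x ∂μ := by
  let incl : Lp ℝ 2 μ →L[ℝ] Lp ℝ 1 μ :=
    (ContinuousLinearMap.mul ℝ ℝ).holderL μ 2 2 1 (Lp.const 2 μ 1)
  refine ⟨(InnerProductSpace.toDual ℝ _).symm (Λ ∘L incl), fun s hs c ↦ ?_⟩
  have hincl : incl (indicatorConstLp 2 hs (measure_ne_top μ s) c)
      = indicatorConstLp 1 hs (measure_ne_top μ s) c := by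
    refine Lp.ext (((ContinuousLinearMap.mul ℝ ℝ).coeFn_holder (r := 1) _ _).trans ?_)
    filter_upwards [Lp.coeFn_const (p := 2) (μ := μ) (1 : ℝ),
      indicatorConstLp_coeFn (p := 1) (hs := hs) (hμs := measure_ne_top μ s) (c := c),
      indicatorConstLp_coeFn (p := 2) (hs := hs) (hμs := measure_ne_top μ s) (c := c)]
      with x h₁ h₂ h₃
    rw [h₁, h₂, h₃]
    simp
  calc Λ (indicatorConstLp 1 hs (measure_ne_top μ s) c)
    _ = inner ℝ ((InnerProductSpace.toDual ℝ _).symm (Λ ∘L incl))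
          (indicatorConstLp 2 hs (measure_ne_top μ s) c) := by
        rw [InnerProductSpace.toDual_symm_apply, ContinuousLinearMap.comp_apply, hincl]
    _ = inner ℝ c (∫ x in s, (InnerProductSpace.toDual ℝ _).symm (Λ ∘L incl) x ∂μ) := by
        rw [real_inner_comm, L2.inner_indicatorConstLp_eq_inner_setIntegral]
    _ = _ := by rw [RCLike.inner_apply, conj_trivial, mul_comm]

lemma ae_abs_le_of_forall_abs_setIntegral_le [IsFiniteMeasure μ] {h : α → ℝ} {C : ℝ}
    (hh : Integrable h μ) (hC : ∀ s, MeasurableSet s → |∫ x in s, h x ∂μ| ≤ C * μ.real s) :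
    ∀ᵐ x ∂μ, |h x| ≤ C := by
  have hle : h ≤ᵐ[μ] fun _ ↦ C := ae_le_of_forall_setIntegral_le hh (integrable_const C)
    fun s hs _ ↦ by simpa [mul_comm] using (abs_le.1 (hC s hs)).2
  have hge : (fun _ ↦ -C) ≤ᵐ[μ] h := ae_le_of_forall_setIntegral_le (integrable_const _) hh
    fun s hs _ ↦ by simpa [mul_comm] using (abs_le.1 (hC s hs)).1
  filter_upwards [hle, hge] with x h₁ h₂ using abs_le.2 ⟨h₂, h₁⟩

lemma exists_measurable_abs_le_ae_eq {h : α → ℝ} {C : ℝ} (hC : 0 ≤ C)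
    (hm : AEMeasurable h μ) (hh : ∀ᵐ x ∂μ, |h x| ≤ C) :
    ∃ k : α → ℝ, Measurable k ∧ (∀ x, |k x| ≤ C) ∧ h =ᵐ[μ] k := by
  refine ⟨fun x ↦ max (-C) (min C (hm.mk h x)),
    measurable_const.max (measurable_const.min hm.measurable_mk),
    fun x ↦ abs_le.2 ⟨le_max_left _ _, max_le (by linarith) (min_le_left _ _)⟩, ?_⟩
  filter_upwards [hh, hm.ae_eq_mk] with x hx hxk
  rw [← hxk, min_eq_right (abs_le.1 hx).2, max_eq_right (abs_le.1 hx).1]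

lemma exists_bounded_density_of_isFiniteMeasure [IsFiniteMeasure μ] (Λ : Lp ℝ 1 μ →L[ℝ] ℝ) :
    ∃ h : α → ℝ, Measurable h ∧ (∀ x, |h x| ≤ ‖Λ‖) ∧ ∀ a : Lp ℝ 1 μ, Λ a = ∫ x, h x * a x ∂μ := by
  obtain ⟨h₀, hh₀⟩ := exists_Lp_two_density Λ
  have hbound (s) (hs : MeasurableSet s) : |∫ x in s, h₀ x ∂μ| ≤ ‖Λ‖ * μ.real s := by
    simpa [hh₀, norm_indicatorConstLp] using
      Λ.le_opNorm (indicatorConstLp 1 hs (measure_ne_top μ s) 1)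
  obtain ⟨h, hm, hle, heq⟩ := exists_measurable_abs_le_ae_eq (norm_nonneg Λ)
    (Lp.aestronglyMeasurable h₀).aemeasurable
    (ae_abs_le_of_forall_abs_setIntegral_le ((Lp.memLp h₀).integrable (by norm_num)) hbound)
  have hmem : MemLp h ∞ μ := memLp_top_of_bound hm.aestronglyMeasurable ‖Λ‖ (.of_forall hle)
  let Φ : Lp ℝ 1 μ →L[ℝ] ℝ :=
    (ContinuousLinearMap.mul ℝ ℝ).lpPairing μ ∞ 1 (hmem.toLp h)
  have hΦ (a : Lp ℝ 1 μ) : Φ a = ∫ x, h x * a x ∂μ := by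
    rw [ContinuousLinearMap.lpPairing_eq_integral]
    refine integral_congr_ae ?_
    filter_upwards [hmem.coeFn_toLp] with x hx
    simp [hx]
  refine ⟨h, hm, hle, fun a ↦ ?_⟩
  rw [← hΦ]
  refine Lp.induction ENNReal.one_ne_top (fun a ↦ Λ a = Φ a) (fun c s hs hμs ↦ ?_)
    (fun a b ha hb _ h₁ h₂ ↦ by rw [map_add, map_add, h₁, h₂])
    (isClosed_eq Λ.continuous Φ.continuous) a
  rw [Lp.simpleFunc.coe_indicatorConst, hh₀, hΦ, setIntegral_congr_ae hs (heq.mono fun x hx _ ↦ hx),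
    ← integral_indicator hs, ← integral_const_mul]
  refine integral_congr_ae ?_
  filter_upwards [indicatorConstLp_coeFn (p := 1) (hs := hs) (hμs := hμs.ne) (c := c)] with x hx
  by_cases hxs : x ∈ s <;> simp [hx, hxs, mul_comm]

lemma exists_bounded_density [SigmaFinite μ] (Λ : Lp ℝ 1 μ →L[ℝ] ℝ) :
    ∃ h : α → ℝ, Measurable h ∧ (∀ x, |h x| ≤ ‖Λ‖) ∧ ∀ a : Lp ℝ 1 μ, Λ a = ∫ x, h x * a x ∂μ := by
  obtain ⟨w, hw, hwm, hwint⟩ := exists_pos_lintegral_lt_of_sigmaFinite μ one_ne_zero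
  have : IsFiniteMeasure (μ.withDensity fun x ↦ w x) :=
    isFiniteMeasure_withDensity (hwint.trans ENNReal.one_lt_top).ne
  let J := withDensitySMulLI (E := ℝ) μ hwm
  obtain ⟨h, hm, hle, hrepr⟩ :=
    exists_bounded_density_of_isFiniteMeasure (Λ ∘L J.toContinuousLinearMap)
  refine ⟨h, hm, fun x ↦ (hle x).trans ?_, fun a ↦ ?_⟩
  · refine (Λ.opNorm_comp_le _).trans ?_
    exact mul_le_of_le_one_right (norm_nonneg _) J.norm_toContinuousLinearMap_le
  have hcancel (x) : w x • ((w x : ℝ)⁻¹ * a x) = a x := by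
    rw [NNReal.smul_def, smul_eq_mul, mul_inv_cancel_left₀ (by exact_mod_cast (hw x).ne')]
  have hint : Integrable (fun x ↦ (w x : ℝ)⁻¹ * a x) (μ.withDensity fun x ↦ w x) := by
    rw [integrable_withDensity_iff_integrable_smul hwm]
    simpa only [hcancel] using L1.integrable_coeFn a
  have hJ : J (hint.toL1 _) = a := by
    ext1
    filter_upwards [(memL1_smul_of_L1_withDensity hwm (hint.toL1 _)).coeFn_toLp,
      (ae_withDensity_iff hwm.coe_nnreal_ennreal).1 hint.coeFn_toL1] with x h₁ h₂
    rw [withDensitySMulLI_apply, h₁, h₂ (by simpa using (hw x).ne'), hcancel]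
  calc Λ a = ∫ x, h x * hint.toL1 _ x ∂(μ.withDensity fun x ↦ w x) := by
        rw [← hrepr, ContinuousLinearMap.comp_apply, LinearIsometry.coe_toContinuousLinearMap, hJ]
    _ = ∫ x, h x * ((w x : ℝ)⁻¹ * a x) ∂(μ.withDensity fun x ↦ w x) :=
        integral_congr_ae (hint.coeFn_toL1.mono fun x hx ↦ congrArg (h x * ·) hx)
    _ = ∫ x, h x * a x ∂μ := by
        rw [integral_withDensity_eq_integral_smul hwm]
        simp only [← mul_smul_comm, hcancel]

lemma exists_bounded_density_of_forall_abs_le_integral [SigmaFinite μ] {V : Type*}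
    [AddCommGroup V] [Module ℝ V] (A : V →ₗ[ℝ] α → ℝ) (hA : ∀ φ, Integrable (A φ) μ)
    (L : V →ₗ[ℝ] ℝ) {K : ℝ} (hK : 0 ≤ K) (hL : ∀ φ, |L φ| ≤ K * ∫ x, |A φ x| ∂μ) :
    ∃ h : α → ℝ, Measurable h ∧ (∀ x, |h x| ≤ K) ∧ ∀ φ, L φ = ∫ x, A φ x * h x ∂μ := by
  let T : V →ₗ[ℝ] Lp ℝ 1 μ :=
    { toFun φ := (hA φ).toL1 (A φ)
      map_add' φ ψ := by
        rw [← Integrable.toL1_add, Integrable.toL1_eq_toL1_iff, map_add]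
      map_smul' c φ := by
        rw [RingHom.id_apply, ← Integrable.toL1_smul' _ (hA φ), Integrable.toL1_eq_toL1_iff,
          map_smul] }
  obtain ⟨Λ, hΛ, hΛT⟩ := exists_extension_of_forall_abs_le T L hK fun φ ↦ by
    simpa only [T, LinearMap.coe_mk, AddHom.coe_mk, L1.norm_of_fun_eq_integral_norm,
      Real.norm_eq_abs] using hL φ
  obtain ⟨h, hm, hle, hrepr⟩ := exists_bounded_density Λ
  refine ⟨h, hm, fun x ↦ (hle x).trans hΛ, fun φ ↦ ?_⟩
  rw [← hΛT, hrepr]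
  refine integral_congr_ae ((hA φ).coeFn_toL1.mono fun x hx ↦ ?_)
  exact (congrArg (h x * ·) hx).trans (mul_comm _ _)

end DualOfL1

section Polar

variable {α ι : Type*} [Fintype ι]

lemma sqrt_sum_sq_le_sum_abs (v : ι → ℝ) : √(∑ i, v i ^ 2) ≤ ∑ i, |v i| := by
  rw [Real.sqrt_le_left (Finset.sum_nonneg fun i _ ↦ abs_nonneg _)]
  simpa only [sq_abs] using
    Finset.sum_sq_le_sq_sum_of_nonneg (s := Finset.univ) fun i _ ↦ abs_nonneg (v i)

lemma exists_polar_decomposition {mα : MeasurableSpace α} (μ : Measure α) {H : α → ι → ℝ}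
    (hH : Measurable H) :
    ∃ σ : α → ι → ℝ, Measurable σ ∧
      (∀ᵐ x ∂μ.withDensity fun x ↦ ENNReal.ofReal √(∑ i, H x i ^ 2), √(∑ i, σ x i ^ 2) = 1) ∧
      ∀ (φ : α → ℝ) (i : ι),
        ∫ x, φ x * σ x i ∂μ.withDensity (fun x ↦ ENNReal.ofReal √(∑ i, H x i ^ 2))
          = ∫ x, φ x * H x i ∂μ := by
  set r : α → ℝ := fun x ↦ √(∑ i, H x i ^ 2)
  have hH' (i) : Measurable fun x ↦ H x i := (measurable_pi_apply i).comp hH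
  have hr : Measurable r := (Finset.measurable_sum _ fun i _ ↦ (hH' i).pow_const 2).sqrt
  have hr_sq (x) : r x ^ 2 = ∑ i, H x i ^ 2 :=
    Real.sq_sqrt (Finset.sum_nonneg fun i _ ↦ sq_nonneg _)
  refine ⟨fun x i ↦ (r x)⁻¹ * H x i, measurable_pi_lambda _ fun i ↦ hr.inv.mul (hH' i), ?_,
    fun φ i ↦ ?_⟩
  · rw [ae_withDensity_iff hr.ennreal_ofReal]
    refine .of_forall fun x hx ↦ ?_
    have hx : r x ≠ 0 := fun h ↦ hx (by simp [h])
    simp only [mul_pow, ← Finset.mul_sum, ← hr_sq]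
    field_simp
    simp
  · change ∫ x, _ ∂(μ.withDensity fun x ↦ ((r x).toNNReal : ℝ≥0∞)) = _
    rw [integral_withDensity_eq_integral_smul hr.real_toNNReal]
    refine integral_congr_ae (.of_forall fun x ↦ ?_)
    have hrx : ((r x).toNNReal : ℝ) = r x := Real.coe_toNNReal _ (Real.sqrt_nonneg _)
    simp only [NNReal.smul_def, hrx, smul_eq_mul]
    rcases eq_or_ne (r x) 0 with h | h
    · have hHx : ∀ i, H x i = 0 := by
        simpa [h, Finset.sum_eq_zero_iff_of_nonneg, sq_nonneg] using (hr_sq x).symm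
      simp [hHx]
    · field_simp

end Polar

section Series

variable {α ι : Type*} {mα : MeasurableSpace α} {μ : Measure α}

lemma integrable_tsum_of_summable_integral_abs [Countable ι] {F : ι → α → ℝ}
    (hF : ∀ k, Integrable (F k) μ) (hs : Summable fun k ↦ ∫ x, |F k x| ∂μ) :
    Integrable (fun x ↦ ∑' k, F k x) μ := by
  have hfin : ∑' k, ∫⁻ x, ‖F k x‖ₑ ∂μ ≠ ∞ := by
    simp_rw [← ofReal_integral_norm_eq_lintegral_enorm (hF _)]
    exact hs.tsum_ofReal_ne_top
  refine ⟨(AEMeasurable.tsum fun k ↦ (hF k).1.aemeasurable).aestronglyMeasurable, ?_⟩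
  refine (lintegral_mono fun x ↦ enorm_tsum_le_tsum_enorm).trans_lt ?_
  rw [lintegral_tsum fun k ↦ (hF k).1.enorm]
  exact hfin.lt_top

variable {a : ι → ℝ} {F : ι → α → ℝ} {M : ℝ}

lemma summable_integral_abs_mul (ha : Summable fun k ↦ |a k|) (hM : ∀ k, ∫ x, |F k x| ∂μ ≤ M) :
    Summable fun k ↦ ∫ x, |a k * F k x| ∂μ := by
  refine .of_nonneg_of_le (fun k ↦ by positivity) (fun k ↦ ?_) (ha.mul_right M)
  simp_rw [abs_mul, integral_const_mul]
  exact mul_le_mul_of_nonneg_left (hM k) (abs_nonneg _)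

lemma integrable_tsum_mul [Countable ι] (ha : Summable fun k ↦ |a k|)
    (hF : ∀ k, Integrable (F k) μ) (hM : ∀ k, ∫ x, |F k x| ∂μ ≤ M) :
    Integrable (fun x ↦ ∑' k, a k * F k x) μ :=
  integrable_tsum_of_summable_integral_abs (fun k ↦ (hF k).const_mul _)
    (summable_integral_abs_mul ha hM)

lemma integral_tsum_mul_mul [Countable ι] (ha : Summable fun k ↦ |a k|)
    (hF : ∀ k, Integrable (F k) μ) (hM : ∀ k, ∫ x, |F k x| ∂μ ≤ M) {b : α → ℝ}
    (hb : AEStronglyMeasurable b μ) {B : ℝ}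
    (hbB : ∀ x, |b x| ≤ B) :
    ∫ x, (∑' k, a k * F k x) * b x ∂μ = ∑' k, a k * ∫ x, F k x * b x ∂μ := by
  have hFb (k) : Integrable (fun x ↦ F k x * b x) μ := (hF k).mul_bdd hb (.of_forall hbB)
  have hle (k) : ∫ x, |F k x * b x| ∂μ ≤ M * |B| := by
    simp only [abs_mul]
    calc ∫ x, |F k x| * |b x| ∂μ
      _ ≤ ∫ x, |F k x| * |B| ∂μ := by
        refine integral_mono (by simpa only [abs_mul] using (hFb k).abs) ((hF k).abs.mul_const _)
          fun x ↦ mul_le_mul_of_nonneg_left ((hbB x).trans (le_abs_self B)) (abs_nonneg _)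
      _ ≤ M * |B| := by
        rw [integral_mul_const]
        exact mul_le_mul_of_nonneg_right (hM k) (abs_nonneg B)
  simp_rw [← tsum_mul_right, mul_assoc, ← integral_const_mul]
  exact (integral_tsum_of_summable_integral_norm (fun k ↦ (hFb k).const_mul (a k))
    (summable_integral_abs_mul ha hle)).symm

end Series

lemma exists_forall_abs_le_of_forall_tsum_bounded {ι κ : Type*} (b : ι → κ → ℝ)
    (hb : ∀ m, ∃ B, ∀ k, |b m k| ≤ B)
    (h : ∀ a : κ → ℝ, Summable (fun k ↦ |a k|) → ∃ C, ∀ m, |∑' k, a k * b m k| ≤ C) :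
    ∃ C, ∀ m k, |b m k| ≤ C := by
  classical
  have hmem (m) : Memℓp (b m) ∞ :=
    memℓp_infty ((hb m).imp fun B hB ↦ forall_mem_range.2 hB)
  let T (m : ι) : lp (fun _ : κ ↦ ℝ) 1 →L[ℝ] ℝ :=
    (lp.dualPairing 1 ∞ (fun _ ↦ ContinuousLinearMap.mul ℝ ℝ) (K := 1)
      fun _ ↦ by simp).flip ⟨b m, hmem m⟩
  have hT (m) (a : lp (fun _ : κ ↦ ℝ) 1) : T m a = ∑' k, a k * b m k := rfl
  obtain ⟨C, hC⟩ := banach_steinhaus (g := T) fun a ↦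
    h a (by simpa using (lp.memℓp a).summable (by simp))
  refine ⟨C, fun m k ↦ ?_⟩
  have hk := (T m).le_of_opNorm_le (hC m) (lp.single 1 k 1)
  rw [lp.norm_single (by simp), hT, tsum_eq_single k fun j hj ↦ by
    rw [lp.single_apply_ne _ _ _ hj, zero_mul]] at hk
  simpa using hk

lemma le_of_forall_pos_le_add_mul {a b c : ℝ} (h : ∀ ε, 0 < ε → ε ≤ 1 → a ≤ b + ε * c) : a ≤ b := by
  have hlim : Tendsto (fun ε : ℝ ↦ b + ε * c) (𝓝 0) (𝓝 b) :=
    (by fun_prop : Continuous fun ε : ℝ ↦ b + ε * c).tendsto' 0 b (by simp)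
  refine ge_of_tendsto (hlim.mono_left (nhdsWithin_le_nhds (s := Ioi 0))) ?_
  filter_upwards [Ioc_mem_nhdsGT one_pos] with ε hε using h ε hε.1 hε.2

lemma abs_sub_le_sq_div_sqrt {ε : ℝ} (hε : 0 < ε) (t : ℝ) : |t| - ε ≤ t ^ 2 / √(t ^ 2 + ε ^ 2) := by
  have hs : 0 < √(t ^ 2 + ε ^ 2) := Real.sqrt_pos.2 (by positivity)
  have hle : √(t ^ 2 + ε ^ 2) ≤ |t| + ε := Real.sqrt_le_iff.2
    ⟨by positivity, by nlinarith [abs_nonneg t, sq_abs t]⟩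
  rw [le_div_iff₀ hs]
  rcases le_total |t| ε with h | h
  · nlinarith [sq_nonneg t]
  · nlinarith [sq_abs t, sq_nonneg ε]

lemma abs_integral_mul_le_of_abs_le {α : Type*} {mα : MeasurableSpace α} {μ : Measure α}
    {a b : α → ℝ} {c : ℝ} (hb : Integrable b μ) (ha : ∀ x, |a x| ≤ c) :
    |∫ x, a x * b x ∂μ| ≤ c * ∫ x, |b x| ∂μ := by
  rw [← integral_const_mul]
  refine norm_integral_le_of_norm_le (f := fun x ↦ a x * b x) (hb.abs.const_mul c)
    (.of_forall fun x ↦ ?_)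
  rw [norm_mul, Real.norm_eq_abs, Real.norm_eq_abs]
  exact mul_le_mul_of_nonneg_right (ha x) (abs_nonneg _)

lemma integral_convolution_mul {E : Type*} [NormedAddCommGroup E] [MeasurableSpace E]
    [BorelSpace E] {μ : Measure E} [IsFiniteMeasureOnCompacts μ] [μ.IsAddRightInvariant]
    {k W b : E → ℝ} (hk : Continuous k) (hks : HasCompactSupport k)
    (hW : Continuous W) (hWs : HasCompactSupport W) (hb : Continuous b) :
    ∫ x, (convolution k W (ContinuousLinearMap.lsmul ℝ ℝ) μ) x * b x ∂μ
      = ∫ t, k t * ∫ x, W x * b (x + t) ∂μ ∂μ := by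
  let F (x t : E) : ℝ := k t * (W (x - t) * b x)
  have hF : Continuous (Function.uncurry F) := by unfold F Function.uncurry; fun_prop
  have hFs : HasCompactSupport (Function.uncurry F) := by
    refine .intro ((hWs.isCompact.add hks.isCompact).prod hks.isCompact) fun ⟨x, t⟩ hxt ↦ ?_
    by_contra hne
    simp only [Function.uncurry, F, mul_eq_zero, not_or] at hne
    exact hxt ⟨⟨x - t, subset_tsupport _ hne.2.1, t, subset_tsupport _ hne.1, sub_add_cancel x t⟩,
      subset_tsupport _ hne.1⟩
  calc ∫ x, (convolution k W (ContinuousLinearMap.lsmul ℝ ℝ) μ) x * b x ∂μ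
    _ = ∫ x, ∫ t, F x t ∂μ ∂μ := by
        simp only [convolution_def, ← integral_mul_const, F, ContinuousLinearMap.lsmul_apply,
          smul_eq_mul, mul_assoc]
    _ = ∫ t, ∫ x, F x t ∂μ ∂μ := integral_integral_swap_of_hasCompactSupport hF hFs
    _ = ∫ t, k t * ∫ x, W x * b (x + t) ∂μ ∂μ := by
        refine integral_congr_ae (.of_forall fun t ↦ ?_)
        simp only [F, integral_const_mul]
        rw [← integral_sub_right_eq_self (fun x ↦ W x * b (x + t)) t]
        simp only [sub_add_cancel]

section DirectionalVariation

variable {E : Type*} [NormedAddCommGroup E] [NormedSpace ℝ E] [MeasurableSpace E]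

/-- `VariationLE μ v W V`: the distributional derivative of `W` in the direction `v` has total
variation at most `V`.  The test functions need not have compact support; for compactly supported
`W`, the only case considered, this makes no difference. -/
def VariationLE (μ : Measure E) (v : E) (W : E → ℝ) (V : ℝ) : Prop :=
  ∀ φ : E → ℝ, ContDiff ℝ (⊤ : ℕ∞) φ → (∀ x, |φ x| ≤ 1) → |∫ x, W x * fderiv ℝ φ x v ∂μ| ≤ V

variable {μ : Measure E} {v : E} {W Z : E → ℝ} {V A : ℝ}

lemma VariationLE.nonneg (h : VariationLE μ v W V) : 0 ≤ V := by
  simpa using h 0 contDiff_const (by simp)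

lemma VariationLE.const_mul (h : VariationLE μ v W V) {c : ℝ} (hc : 0 ≤ c) :
    VariationLE μ v (fun x ↦ c * W x) (c * V) := fun φ hφ hφ1 ↦ by
  simp_rw [mul_assoc, integral_const_mul, abs_mul, abs_of_nonneg hc]
  exact mul_le_mul_of_nonneg_left (h φ hφ hφ1) hc

variable [BorelSpace E] [μ.IsAddHaarMeasure]

lemma VariationLE.convolution (h : VariationLE μ v W V) (hW : Continuous W)
    (hWs : HasCompactSupport W) {k : E → ℝ} (hk : Continuous k) (hks : HasCompactSupport k)
    (hk0 : ∀ x, 0 ≤ k x) (hk1 : ∫ x, k x ∂μ = 1) :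
    VariationLE μ v (convolution k W (ContinuousLinearMap.lsmul ℝ ℝ) μ) V := by
  intro φ hφ hφ1
  have hdφ := hφ.continuous_fderiv (by simp)
  rw [integral_convolution_mul hk hks hW hWs (by fun_prop), ← mul_one V, ← hk1,
    ← integral_const_mul, ← Real.norm_eq_abs]
  refine norm_integral_le_of_norm_le ((hk.integrable_of_hasCompactSupport hks).const_mul V)
    (.of_forall fun t ↦ ?_)
  have htrans := h (fun x ↦ φ (x + t)) (by fun_prop) fun x ↦ hφ1 _
  simp only [fderiv_comp_add_right] at htrans
  rw [norm_mul, Real.norm_of_nonneg (hk0 t), mul_comm]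
  exact mul_le_mul_of_nonneg_right htrans (hk0 t)

/-- The first function is tested against `sin (k U)` and the second against `cos (k U)`, so that the
derivatives of `Z` cancel when `U = W`. -/
lemma VariationLE.abs_integral_fderiv_mul_cos_le {k : ℝ} (hk : k ≠ 0)
    (hcos : VariationLE μ v (fun x ↦ k⁻¹ * Real.cos (k * W x) * Z x) A)
    (hsin : VariationLE μ v (fun x ↦ k⁻¹ * Real.sin (k * W x) * Z x) A)
    (hW : Continuous W) (hZ : Continuous Z) (hZs : HasCompactSupport Z) {U : E → ℝ}
    (hU : ContDiff ℝ (⊤ : ℕ∞) U) :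
    |∫ x, fderiv ℝ U x v * Z x * Real.cos (k * (U x - W x)) ∂μ| ≤ 2 * A := by
  have hdU := hU.continuous_fderiv (by simp)
  have hUc := hU.continuous
  have hUx (x) : HasFDerivAt U (fderiv ℝ U x) x := (hU.differentiable (by simp) x).hasFDerivAt
  have hdsin (x) : fderiv ℝ (fun x ↦ Real.sin (k * U x)) x v
      = Real.cos (k * U x) * (k * fderiv ℝ U x v) := by
    simp [((hUx x).const_mul k).sin.fderiv]
  have hdcos (x) : fderiv ℝ (fun x ↦ Real.cos (k * U x)) x v
      = -Real.sin (k * U x) * (k * fderiv ℝ U x v) := by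
    simp [((hUx x).const_mul k).cos.fderiv]
  have hs := hcos (fun x ↦ Real.sin (k * U x)) (by fun_prop) fun x ↦ Real.abs_sin_le_one _
  have hc := hsin (fun x ↦ Real.cos (k * U x)) (by fun_prop) fun x ↦ Real.abs_cos_le_one _
  simp only [hdsin] at hs
  simp only [hdcos] at hc
  have hexpand (x) : fderiv ℝ U x v * Z x * Real.cos (k * (U x - W x))
      = k⁻¹ * Real.cos (k * W x) * Z x * (Real.cos (k * U x) * (k * fderiv ℝ U x v))
        - k⁻¹ * Real.sin (k * W x) * Z x * (-Real.sin (k * U x) * (k * fderiv ℝ U x v)) := by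
    rw [mul_sub, Real.cos_sub]
    field_simp
    ring
  simp_rw [hexpand]
  rw [integral_sub, two_mul]
  · exact (abs_sub _ _).trans (add_le_add hs hc)
  all_goals
    exact Continuous.integrable_of_hasCompactSupport (by fun_prop) hZs.mul_left.mul_right

variable [FiniteDimensional ℝ E]

lemma integral_mul_fderiv_eq_neg_of_contDiff {a φ : E → ℝ} (ha : ContDiff ℝ (⊤ : ℕ∞) a)
    (has : HasCompactSupport a) (hφ : ContDiff ℝ (⊤ : ℕ∞) φ) :
    ∫ x, a x * fderiv ℝ φ x v ∂μ = -∫ x, fderiv ℝ a x v * φ x ∂μ := by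
  have hda := ha.continuous_fderiv (by simp)
  have hdφ := hφ.continuous_fderiv (by simp)
  have hac := ha.continuous
  have hφc := hφ.continuous
  exact integral_mul_fderiv_eq_neg_fderiv_mul_of_integrable
    ((by fun_prop : Continuous _).integrable_of_hasCompactSupport (has.fderiv_apply ℝ v).mul_right)
    ((by fun_prop : Continuous _).integrable_of_hasCompactSupport has.mul_right)
    ((by fun_prop : Continuous _).integrable_of_hasCompactSupport has.mul_right)
    (fun x _ ↦ ha.differentiable (by simp) x) (fun x _ ↦ hφ.differentiable (by simp) x)

lemma VariationLE.exists_contDiff_approx (h : VariationLE μ v W V) (hW : Continuous W)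
    (hWs : HasCompactSupport W) {τ : ℝ} (hτ : 0 < τ) :
    ∃ U : E → ℝ, ContDiff ℝ (⊤ : ℕ∞) U ∧ HasCompactSupport U ∧ (∀ x, |U x - W x| ≤ τ) ∧
      VariationLE μ v U V := by
  obtain ⟨δ, hδ, hδW⟩ :=
    Metric.uniformContinuous_iff.1 (hWs.uniformContinuous_of_continuous hW) τ hτ
  let ρ : ContDiffBump (0 : E) := ⟨δ / 2, δ, by positivity, by linarith⟩
  refine ⟨_, ρ.hasCompactSupport_normed.contDiff_convolution_left (ContinuousLinearMap.lsmul ℝ ℝ)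
    ρ.contDiff_normed hW.locallyIntegrable, ρ.hasCompactSupport_normed.convolution _ hWs,
    fun x ↦ ?_, h.convolution hW hWs ρ.continuous_normed ρ.hasCompactSupport_normed
      ρ.nonneg_normed ρ.integral_normed⟩
  exact ρ.dist_normed_convolution_le hW.aestronglyMeasurable fun y hy ↦ (hδW hy).le

lemma VariationLE.integral_abs_fderiv_le (h : VariationLE μ v W V) (hW : ContDiff ℝ (⊤ : ℕ∞) W)
    (hWs : HasCompactSupport W) : ∫ x, |fderiv ℝ W x v| ∂μ ≤ V := by
  set d : E → ℝ := fun x ↦ fderiv ℝ W x v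
  have hd : ContDiff ℝ (⊤ : ℕ∞) d := (hW.fderiv_right (by simp)).clm_apply contDiff_const
  have hds : HasCompactSupport d := hWs.fderiv_apply ℝ v
  refine le_of_forall_pos_le_add_mul (c := μ.real (tsupport d)) fun ε hε _ ↦ ?_
  have hpos (x) : 0 < d x ^ 2 + ε ^ 2 := by positivity
  set φ : E → ℝ := fun x ↦ d x / √(d x ^ 2 + ε ^ 2)
  have hφ : ContDiff ℝ (⊤ : ℕ∞) φ :=
    hd.div (((hd.pow 2).add contDiff_const).sqrt fun x ↦ (hpos x).ne')
      fun x ↦ (Real.sqrt_pos.2 (hpos x)).ne'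
  have hφ1 (x) : |φ x| ≤ 1 := by
    rw [abs_div, abs_of_pos (Real.sqrt_pos.2 (hpos x)), div_le_one (Real.sqrt_pos.2 (hpos x))]
    exact Real.abs_le_sqrt (by nlinarith)
  have hle : ∫ x, d x * φ x ∂μ ≤ V := by
    have := h φ hφ hφ1
    rw [integral_mul_fderiv_eq_neg_of_contDiff hW hWs hφ, abs_neg] at this
    exact (abs_le.1 this).2
  have hint : Integrable (fun x ↦ d x * φ x) μ :=
    (hd.continuous.mul hφ.continuous).integrable_of_hasCompactSupport hds.mul_right
  have hcore : IntegrableOn (fun _ ↦ ε) (tsupport d) μ :=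
    integrableOn_const hds.isCompact.measure_lt_top.ne
  have hpt (x) : |d x| ≤ d x * φ x + (tsupport d).indicator (fun _ ↦ ε) x := by
    by_cases hx : x ∈ tsupport d
    · have := abs_sub_le_sq_div_sqrt hε (d x)
      rw [indicator_of_mem hx, ← mul_div_assoc, ← sq]
      linarith
    · simp [image_eq_zero_of_notMem_tsupport hx, hx]
  calc ∫ x, |d x| ∂μ
    _ ≤ ∫ x, d x * φ x + (tsupport d).indicator (fun _ ↦ ε) x ∂μ :=
        integral_mono (hd.continuous.integrable_of_hasCompactSupport hds).abs
          (hint.add (hcore.integrable_indicator (isClosed_tsupport d).measurableSet)) hpt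
    _ = ∫ x, d x * φ x ∂μ + ε * μ.real (tsupport d) := by
        rw [integral_add hint (hcore.integrable_indicator (isClosed_tsupport d).measurableSet),
          integral_indicator_const _ (isClosed_tsupport d).measurableSet, smul_eq_mul, mul_comm ε]
    _ ≤ V + ε * μ.real (tsupport d) := by gcongr

lemma VariationLE.abs_integral_fderiv_mul_le {k B τ : ℝ} (hk : k ≠ 0)
    (hcos : VariationLE μ v (fun x ↦ k⁻¹ * Real.cos (k * W x) * Z x) A)
    (hsin : VariationLE μ v (fun x ↦ k⁻¹ * Real.sin (k * W x) * Z x) A)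
    (hW : Continuous W) (hZ : Continuous Z) (hZs : HasCompactSupport Z) (hZB : ∀ x, |Z x| ≤ B)
    {U : E → ℝ} (hU : ContDiff ℝ (⊤ : ℕ∞) U) (hUs : HasCompactSupport U)
    (hUV : VariationLE μ v U V) (hUW : ∀ x, |U x - W x| ≤ τ) :
    |∫ x, fderiv ℝ U x v * Z x ∂μ| ≤ 2 * A + B * ((k * τ) ^ 2 / 2) * V := by
  have hdU := hU.continuous_fderiv (by simp)
  have hUc := hU.continuous
  set c : E → ℝ := fun x ↦ Real.cos (k * (U x - W x))
  have hc (x) : |1 - c x| ≤ (k * τ) ^ 2 / 2 := by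
    rw [abs_of_nonneg (sub_nonneg.2 (Real.cos_le_one _))]
    have h1 := Real.one_sub_sq_div_two_le_cos (x := k * (U x - W x))
    have h2 : (U x - W x) ^ 2 ≤ τ ^ 2 := sq_le_sq' (abs_le.1 (hUW x)).1 (abs_le.1 (hUW x)).2
    simp only [mul_pow] at h1 ⊢
    nlinarith [mul_le_mul_of_nonneg_left h2 (sq_nonneg k)]
  have hZc (x) : |Z x * (1 - c x)| ≤ B * ((k * τ) ^ 2 / 2) := by
    rw [abs_mul]
    exact mul_le_mul (hZB x) (hc x) (abs_nonneg _) ((abs_nonneg _).trans (hZB x))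
  have herr : |∫ x, Z x * (1 - c x) * fderiv ℝ U x v ∂μ| ≤ B * ((k * τ) ^ 2 / 2) * V :=
    (abs_integral_mul_le_of_abs_le (Continuous.integrable_of_hasCompactSupport (by fun_prop)
      (hUs.fderiv_apply ℝ v)) hZc).trans (mul_le_mul_of_nonneg_left
        (hUV.integral_abs_fderiv_le hU hUs) ((abs_nonneg _).trans (hZc 0)))
  have hsplit : ∫ x, fderiv ℝ U x v * Z x ∂μ
      = ∫ x, fderiv ℝ U x v * Z x * c x ∂μ + ∫ x, Z x * (1 - c x) * fderiv ℝ U x v ∂μ := by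
    rw [← integral_add]
    · exact integral_congr_ae (.of_forall fun x ↦ by ring)
    · exact Continuous.integrable_of_hasCompactSupport (by fun_prop) hZs.mul_left.mul_right
    · exact Continuous.integrable_of_hasCompactSupport (by fun_prop) hZs.mul_right.mul_right
  rw [hsplit]
  exact (abs_add_le _ _).trans
    (add_le_add (abs_integral_fderiv_mul_cos_le hk hcos hsin hW hZ hZs hU) herr)

lemma integral_mul_fderiv_eq_sub_sub (hW : Continuous W) (hZ : Continuous Z)
    (hZs : HasCompactSupport Z) {U φ : E → ℝ} (hU : ContDiff ℝ (⊤ : ℕ∞) U)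
    (hUs : HasCompactSupport U) (hφ : ContDiff ℝ (⊤ : ℕ∞) φ) (hφs : HasCompactSupport φ) :
    ∫ x, W x * fderiv ℝ φ x v ∂μ = -∫ x, fderiv ℝ U x v * Z x ∂μ
      - ∫ x, (φ x - Z x) * fderiv ℝ U x v ∂μ - ∫ x, (U x - W x) * fderiv ℝ φ x v ∂μ := by
  have hdφ := hφ.continuous_fderiv (by simp)
  have hdU := hU.continuous_fderiv (by simp)
  have hUφ : ∫ x, U x * fderiv ℝ φ x v ∂μ
      = ∫ x, W x * fderiv ℝ φ x v ∂μ + ∫ x, (U x - W x) * fderiv ℝ φ x v ∂μ := by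
    rw [← integral_add]
    · exact integral_congr_ae (.of_forall fun x ↦ by ring)
    all_goals
      exact Continuous.integrable_of_hasCompactSupport (by fun_prop)
        (hφs.fderiv_apply ℝ v).mul_left
  have hdUφ : ∫ x, fderiv ℝ U x v * φ x ∂μ
      = ∫ x, fderiv ℝ U x v * Z x ∂μ + ∫ x, (φ x - Z x) * fderiv ℝ U x v ∂μ := by
    rw [← integral_add]
    · exact integral_congr_ae (.of_forall fun x ↦ by ring)
    · exact Continuous.integrable_of_hasCompactSupport (by fun_prop) hZs.mul_left
    · exact Continuous.integrable_of_hasCompactSupport (by fun_prop)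
        (hUs.fderiv_apply ℝ v).mul_left
  linarith [integral_mul_fderiv_eq_neg_of_contDiff (v := v) (μ := μ) hU hUs hφ]

lemma VariationLE.abs_integral_mul_fderiv_le {k ε : ℝ} (hk : k ≠ 0)
    (hcos : VariationLE μ v (fun x ↦ k⁻¹ * Real.cos (k * W x) * Z x) A)
    (hsin : VariationLE μ v (fun x ↦ k⁻¹ * Real.sin (k * W x) * Z x) A)
    (hWV : VariationLE μ v W V) (hW : Continuous W) (hWs : HasCompactSupport W)
    (hZ : Continuous Z) (hZs : HasCompactSupport Z) {φ : E → ℝ} (hφ : ContDiff ℝ (⊤ : ℕ∞) φ)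
    (hφs : HasCompactSupport φ) (hφZ : ∀ x, |φ x - Z x| ≤ ε) :
    |∫ x, W x * fderiv ℝ φ x v ∂μ| ≤ 2 * A + ε * V := by
  obtain ⟨B, hB⟩ := hZ.bounded_above_of_compact_support hZs
  have hB0 : 0 ≤ B := (norm_nonneg _).trans (hB 0)
  have hdφ := hφ.continuous_fderiv (by simp)
  have hε : 0 ≤ ε := (abs_nonneg _).trans (hφZ 0)
  have hφd : Integrable (fun x ↦ fderiv ℝ φ x v) μ :=
    Continuous.integrable_of_hasCompactSupport (by fun_prop) (hφs.fderiv_apply ℝ v)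
  refine le_of_forall_pos_le_add_mul
    (c := B * (k ^ 2 / 2) * V + ∫ x, |fderiv ℝ φ x v| ∂μ) fun τ hτ hτ1 ↦ ?_
  obtain ⟨U, hU, hUs, hUW, hUV⟩ := hWV.exists_contDiff_approx hW hWs hτ
  have hdU := hU.continuous_fderiv (by simp)
  have hUd : Integrable (fun x ↦ fderiv ℝ U x v) μ :=
    Continuous.integrable_of_hasCompactSupport (by fun_prop) (hUs.fderiv_apply ℝ v)
  have hτ2 : (k * τ) ^ 2 ≤ k ^ 2 * τ := by nlinarith [sq_nonneg k]
  have hUZ := abs_integral_fderiv_mul_le hk hcos hsin hW hZ hZs hB hU hUs hUV hUW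
  have hφZU := (abs_integral_mul_le_of_abs_le hUd hφZ).trans
    (mul_le_mul_of_nonneg_left (hUV.integral_abs_fderiv_le hU hUs) hε)
  have hUWφ := abs_integral_mul_le_of_abs_le hφd hUW
  have : B * ((k * τ) ^ 2 / 2) * V ≤ τ * (B * (k ^ 2 / 2) * V) := by
    have := mul_le_mul_of_nonneg_left hτ2 (mul_nonneg hB0 hWV.nonneg)
    linarith
  rw [integral_mul_fderiv_eq_sub_sub hW hZ hZs hU hUs hφ hφs]
  rw [abs_le] at hUZ hφZU hUWφ ⊢
  constructor <;> linarith

end DirectionalVariation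

section OscillatingFunctions

variable {E : Type*} [NormedAddCommGroup E] [NormedSpace ℝ E] {h : ℝ → ℝ} {p η : E → ℝ} {δ : ℝ}

lemma norm_fderiv_comp_mul_le (hh : Differentiable ℝ h) (hδ : ∀ t, |h t| ≤ δ)
    (hh1 : ∀ t, |deriv h t| ≤ 1) (hp : Differentiable ℝ p) (hη : Differentiable ℝ η)
    (hp1 : ∀ x ∈ tsupport η, ‖fderiv ℝ p x‖ ≤ 1) (x : E) :
    ‖fderiv ℝ (fun x ↦ h (p x) * η x) x‖ ≤ δ * ‖fderiv ℝ η x‖ + |η x| := by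
  have hd : HasFDerivAt (fun x ↦ h (p x) * η x)
      (h (p x) • fderiv ℝ η x + η x • deriv h (p x) • fderiv ℝ p x) x :=
    ((hh (p x)).hasDerivAt.comp_hasFDerivAt x (hp x).hasFDerivAt).mul (hη x).hasFDerivAt
  rw [hd.fderiv]
  refine (norm_add_le _ _).trans ?_
  rw [norm_smul, norm_smul, norm_smul, Real.norm_eq_abs, Real.norm_eq_abs, Real.norm_eq_abs]
  gcongr
  · exact hδ _
  · by_cases hx : x ∈ tsupport η
    · exact mul_le_of_le_one_right (abs_nonneg _)
        (mul_le_one₀ (hh1 _) (norm_nonneg _) (hp1 x hx))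
    · simp [image_eq_zero_of_notMem_tsupport hx]

variable [MeasurableSpace E] {μ : Measure E} {u : E → ℝ} {A : ℝ}

/-- `CZeroBVNormLE μ u A`: the norms of a differentiable function `u` in `C₀`, in `L¹` and in `BV`
(that is, the `L¹` norm of its gradient) are at most `A`. -/
structure CZeroBVNormLE (μ : Measure E) (u : E → ℝ) (A : ℝ) : Prop where
  abs_le : ∀ x, |u x| ≤ A
  integral_abs_le : ∫ x, |u x| ∂μ ≤ A
  integral_norm_fderiv_le : ∫ x, ‖fderiv ℝ u x‖ ∂μ ≤ A

lemma exists_cZeroBVNormLE (hu : Continuous u) (hus : HasCompactSupport u) :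
    ∃ A, 0 < A ∧ CZeroBVNormLE μ u A := by
  obtain ⟨M, hM⟩ := hu.bounded_above_of_compact_support hus
  have hM0 : 0 ≤ M := (norm_nonneg _).trans (hM 0)
  have h1 : 0 ≤ ∫ x, |u x| ∂μ := by positivity
  have h2 : 0 ≤ ∫ x, ‖fderiv ℝ u x‖ ∂μ := by positivity
  refine ⟨M + ∫ x, |u x| ∂μ + ∫ x, ‖fderiv ℝ u x‖ ∂μ + 1, by positivity,
    fun x ↦ (hM x).trans ?_, ?_, ?_⟩ <;> linarith

lemma CZeroBVNormLE.const_mul (h : CZeroBVNormLE μ u A) (hu : Differentiable ℝ u) {c : ℝ}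
    (hc : 0 ≤ c) : CZeroBVNormLE μ (fun x ↦ c * u x) (c * A) where
  abs_le x := by
    rw [abs_mul, abs_of_nonneg hc]
    exact mul_le_mul_of_nonneg_left (h.abs_le x) hc
  integral_abs_le := by
    simp_rw [abs_mul, abs_of_nonneg hc, integral_const_mul]
    exact mul_le_mul_of_nonneg_left h.integral_abs_le hc
  integral_norm_fderiv_le := by
    simp_rw [fderiv_const_mul (hu _), norm_smul, Real.norm_of_nonneg hc, integral_const_mul]
    exact mul_le_mul_of_nonneg_left h.integral_norm_fderiv_le hc

variable [OpensMeasurableSpace E] [IsFiniteMeasureOnCompacts μ] {Q k : ℝ}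

lemma CZeroBVNormLE.comp_mul (hηQ : CZeroBVNormLE μ η Q) (hh : Differentiable ℝ h)
    (hδ : ∀ t, |h t| ≤ δ) (hh1 : ∀ t, |deriv h t| ≤ 1) (hp : Differentiable ℝ p)
    (hη : ContDiff ℝ 1 η) (hηs : HasCompactSupport η) (hp1 : ∀ x ∈ tsupport η, ‖fderiv ℝ p x‖ ≤ 1) :
    CZeroBVNormLE μ (fun x ↦ h (p x) * η x) (∫ x, |η x| ∂μ + δ * Q) := by
  have hδ0 : 0 ≤ δ := (abs_nonneg _).trans (hδ 0)
  have hη0 : 0 ≤ ∫ x, |η x| ∂μ := by positivity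
  have hηi : Integrable η μ := hη.continuous.integrable_of_hasCompactSupport hηs
  have hdηi : Integrable (fun x ↦ ‖fderiv ℝ η x‖) μ :=
    ((hη.continuous_fderiv one_ne_zero).integrable_of_hasCompactSupport (hηs.fderiv ℝ)).norm
  have hpt (x) : |h (p x) * η x| ≤ δ * |η x| := by
    rw [abs_mul]
    exact mul_le_mul_of_nonneg_right (hδ _) (abs_nonneg _)
  refine ⟨fun x ↦ ?_, ?_, ?_⟩
  · calc |h (p x) * η x| ≤ δ * |η x| := hpt x
      _ ≤ δ * Q := by gcongr; exact hηQ.abs_le x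
      _ ≤ _ := le_add_of_nonneg_left hη0
  · calc ∫ x, |h (p x) * η x| ∂μ
      _ ≤ ∫ x, δ * |η x| ∂μ := integral_mono_of_nonneg (.of_forall fun x ↦ abs_nonneg _)
          (hηi.abs.const_mul δ) (.of_forall hpt)
      _ ≤ δ * Q := by rw [integral_const_mul]; gcongr; exact hηQ.integral_abs_le
      _ ≤ _ := le_add_of_nonneg_left hη0
  · calc ∫ x, ‖fderiv ℝ (fun x ↦ h (p x) * η x) x‖ ∂μ
      _ ≤ ∫ x, δ * ‖fderiv ℝ η x‖ + |η x| ∂μ :=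
          integral_mono_of_nonneg (.of_forall fun x ↦ norm_nonneg _)
            ((hdηi.const_mul δ).add hηi.abs) (.of_forall (norm_fderiv_comp_mul_le hh hδ hh1 hp
              (hη.differentiable one_ne_zero) hp1))
      _ = ∫ x, |η x| ∂μ + δ * ∫ x, ‖fderiv ℝ η x‖ ∂μ := by
          rw [integral_add (hdηi.const_mul δ) hηi.abs, integral_const_mul, add_comm]
      _ ≤ _ := by gcongr; exact hηQ.integral_norm_fderiv_le

lemma CZeroBVNormLE.inv_mul_cos_mul (hηQ : CZeroBVNormLE μ η Q) (hk : 0 < k)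
    (hp : Differentiable ℝ p) (hη : ContDiff ℝ 1 η) (hηs : HasCompactSupport η)
    (hp1 : ∀ x ∈ tsupport η, ‖fderiv ℝ p x‖ ≤ 1) :
    CZeroBVNormLE μ (fun x ↦ k⁻¹ * Real.cos (k * p x) * η x) (∫ x, |η x| ∂μ + k⁻¹ * Q) := by
  refine hηQ.comp_mul (h := fun t ↦ k⁻¹ * Real.cos (k * t)) (by fun_prop) (fun t ↦ ?_) (fun t ↦ ?_)
    hp hη hηs hp1
  · rw [abs_mul, abs_of_pos (inv_pos.2 hk)]
    exact mul_le_of_le_one_right (by positivity) (Real.abs_cos_le_one _)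
  · have : HasDerivAt (fun t ↦ k⁻¹ * Real.cos (k * t)) (-Real.sin (k * t)) t :=
      (((hasDerivAt_id' t).const_mul k).cos.const_mul k⁻¹).congr_deriv (by field_simp)
    rw [this.deriv, abs_neg]
    exact Real.abs_sin_le_one _

lemma CZeroBVNormLE.inv_mul_sin_mul (hηQ : CZeroBVNormLE μ η Q) (hk : 0 < k)
    (hp : Differentiable ℝ p) (hη : ContDiff ℝ 1 η) (hηs : HasCompactSupport η)
    (hp1 : ∀ x ∈ tsupport η, ‖fderiv ℝ p x‖ ≤ 1) :
    CZeroBVNormLE μ (fun x ↦ k⁻¹ * Real.sin (k * p x) * η x) (∫ x, |η x| ∂μ + k⁻¹ * Q) := by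
  refine hηQ.comp_mul (h := fun t ↦ k⁻¹ * Real.sin (k * t)) (by fun_prop) (fun t ↦ ?_) (fun t ↦ ?_)
    hp hη hηs hp1
  · rw [abs_mul, abs_of_pos (inv_pos.2 hk)]
    exact mul_le_of_le_one_right (by positivity) (Real.abs_sin_le_one _)
  · have : HasDerivAt (fun t ↦ k⁻¹ * Real.sin (k * t)) (Real.cos (k * t)) t :=
      (((hasDerivAt_id' t).const_mul k).sin.const_mul k⁻¹).congr_deriv (by field_simp)
    rw [this.deriv]
    exact Real.abs_cos_le_one _

end OscillatingFunctions

section BoundedVariation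

variable {n : ℕ} {Ω : Set (En n)} {w φ : En n → ℝ} {ν : Measure (En n)}

lemma setIntegral_mul_eq_integral_of_tsupport_subset (hφ : tsupport φ ⊆ Ω) (w : En n → ℝ) :
    ∫ x in Ω, w x * φ x = ∫ x, w x * φ x :=
  setIntegral_eq_integral_of_forall_compl_eq_zero fun x hx ↦ by
    rw [image_eq_zero_of_notMem_tsupport fun h ↦ hx (hφ h), mul_zero]

lemma SmoothTest.tsupport_fderiv_subset (hφ : SmoothTest Ω φ) (v : En n) :
    tsupport (fun x ↦ fderiv ℝ φ x v) ⊆ Ω :=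
  (tsupport_fderiv_apply_subset ℝ v).trans hφ.2.2

lemma SmoothTest.continuous_fderiv (hφ : SmoothTest Ω φ) (v : En n) :
    Continuous fun x ↦ fderiv ℝ φ x v :=
  (hφ.1.continuous_fderiv (by simp)).clm_apply continuous_const

lemma SmoothTest.integrable_fderiv (hφ : SmoothTest Ω φ) (v : En n) :
    Integrable fun x ↦ fderiv ℝ φ x v :=
  (hφ.continuous_fderiv v).integrable_of_hasCompactSupport (hφ.2.1.fderiv_apply ℝ v)

lemma exists_memBVs_of_integrableOn_weak_gradient (hΩ : IsOpen Ω) (hw : IntegrableOn w Ω)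
    {G : Fin n → En n → ℝ} (hG : ∀ i, IntegrableOn (G i) Ω)
    (h : ∀ φ, SmoothTest Ω φ → ∀ i, ∫ x in Ω, w x * fderiv ℝ φ x (EuclideanSpace.single i 1)
      = -∫ x in Ω, φ x * G i x) :
    ∃ ν, MemBVs Ω w ν := by
  let H (x : En n) (i : Fin n) : ℝ := (hG i).1.mk (G i) x
  have hH : Measurable H :=
    measurable_pi_lambda _ fun i ↦ (hG i).1.stronglyMeasurable_mk.measurable
  have hGH (i) : G i =ᵐ[volume.restrict Ω] fun x ↦ H x i := (hG i).1.ae_eq_mk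
  have hHi : Integrable (fun x ↦ ∑ i, |H x i|) (volume.restrict Ω) :=
    integrable_finsetSum _ fun i _ ↦ ((hG i).congr (hGH i)).abs
  obtain ⟨σ, hσ, hσ1, hσH⟩ := exists_polar_decomposition (volume.restrict Ω) hH
  refine ⟨_, hw, ?_, σ, hσ, hσ1, ?_, fun φ hφ i ↦ ?_⟩
  · refine (measure_mono (subset_univ _)).trans_lt ?_
    rw [withDensity_apply _ .univ, Measure.restrict_univ]
    exact (lintegral_mono fun x ↦ ENNReal.ofReal_le_ofReal (sqrt_sum_sq_le_sum_abs (H x))).trans_lt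
      hHi.lintegral_lt_top
  · exact withDensity_absolutelyContinuous _ _ (by simp [hΩ.measurableSet.compl])
  · rw [hσH, h φ hφ i]
    exact congrArg Neg.neg (integral_congr_ae ((hGH i).mono fun x hx ↦ congrArg (φ x * ·) hx))

lemma MemBVs.abs_setIntegral_mul_fderiv_le (h : MemBVs Ω w ν) (hφ : SmoothTest Ω φ)
    (hφ1 : ∀ x, |φ x| ≤ 1) (i : Fin n) :
    |∫ x in Ω, w x * fderiv ℝ φ x (EuclideanSpace.single i 1)| ≤ ν.real univ := by
  obtain ⟨-, hνΩ, σ, -, hσ1, hνΩc, hσ⟩ := h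
  have : IsFiniteMeasure ν :=
    ⟨(measure_univ_le_add_compl Ω).trans_lt (by rwa [hνΩc, add_zero])⟩
  rw [hσ φ hφ i, abs_neg, ← Real.norm_eq_abs, ← one_mul (ν.real univ)]
  refine norm_integral_le_of_norm_le_const (hσ1.mono fun x hx ↦ ?_)
  have hσi : |σ x i| ≤ 1 := by
    rw [← hx]
    exact Real.abs_le_sqrt
      (Finset.single_le_sum (f := fun i ↦ σ x i ^ 2) (fun i _ ↦ sq_nonneg _) (Finset.mem_univ i))
  rw [norm_mul]
  exact mul_le_one₀ (hφ1 x) (norm_nonneg _) hσi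

variable {ι : Type*} {u : ι → En n → ℝ} {a : ι → ℝ}

lemma memCZero_tsum_mul (hu : ∀ k, SmoothTest Ω (u k)) (hu1 : ∀ k x, |u k x| ≤ 1)
    (ha : Summable fun k ↦ |a k|) : MemCZero Ω fun x ↦ ∑' k, a k * u k x := by
  have hb (k x) : ‖a k * u k x‖ ≤ |a k| := by
    rw [norm_mul]
    exact mul_le_of_le_one_right (abs_nonneg _) (hu1 k x)
  refine ⟨(continuous_tsum (fun k ↦ continuous_const.mul (hu k).1.continuous) ha hb).continuousOn,
    fun ε hε ↦ ?_⟩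
  obtain ⟨s, hs⟩ := ((tendsto_tsum_compl_atTop_zero fun k ↦ |a k|).eventually_le_const hε).exists
  refine ⟨⋃ k ∈ s, tsupport (u k), s.isCompact_biUnion fun k _ ↦ (hu k).2.1,
    iUnion₂_subset fun k _ ↦ (hu k).2.2, fun x hx ↦ ?_⟩
  have hzero : ∑ k ∈ s, a k * u k x = 0 := Finset.sum_eq_zero fun k hk ↦ by
    rw [image_eq_zero_of_notMem_tsupport fun h ↦ hx.2 (mem_biUnion hk h), mul_zero]
  change |∑' k, a k * u k x| ≤ ε
  rw [← (Summable.of_norm_bounded ha fun k ↦ hb k x).sum_add_tsum_subtype_compl s, hzero, zero_add]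
  exact (tsum_of_norm_bounded (ha.subtype _).hasSum fun k ↦ hb k x).trans hs

lemma CZeroBVNormLE.integral_abs_fderiv_single_le {u : En n → ℝ} {A : ℝ}
    (h : CZeroBVNormLE volume u A) (hu : SmoothTest Ω u) (i : Fin n) :
    ∫ x, |fderiv ℝ u x (EuclideanSpace.single i 1)| ≤ A := by
  refine le_trans (integral_mono (hu.integrable_fderiv _).abs ?_ fun x ↦ ?_)
    h.integral_norm_fderiv_le
  · exact ((hu.1.continuous_fderiv (by simp)).integrable_of_hasCompactSupport
      (hu.2.1.fderiv ℝ)).norm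
  · simpa using (fderiv ℝ u x).le_opNorm (EuclideanSpace.single i 1)

lemma exists_memBVs_tsum_mul [Countable ι] (hΩ : IsOpen Ω) (hu : ∀ k, SmoothTest Ω (u k))
    (hu1 : ∀ k, CZeroBVNormLE volume (u k) 1) (ha : Summable fun k ↦ |a k|) :
    ∃ ν, MemBVs Ω (fun x ↦ ∑' k, a k * u k x) ν := by
  have hui (k) : Integrable (u k) :=
    (hu k).1.continuous.integrable_of_hasCompactSupport (hu k).2.1
  have hdu1 (i : Fin n) (k) := (hu1 k).integral_abs_fderiv_single_le (hu k) i
  refine exists_memBVs_of_integrableOn_weak_gradient hΩ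
    (integrable_tsum_mul ha hui fun k ↦ (hu1 k).integral_abs_le).integrableOn
    (G := fun i x ↦ ∑' k, a k * fderiv ℝ (u k) x (EuclideanSpace.single i 1))
    (fun i ↦ (integrable_tsum_mul ha (fun k ↦ (hu k).integrable_fderiv _) (hdu1 i)).integrableOn)
    fun φ hφ i ↦ ?_
  obtain ⟨M, hM⟩ := hφ.1.continuous.bounded_above_of_compact_support hφ.2.1
  obtain ⟨M', hM'⟩ := (hφ.continuous_fderiv _).bounded_above_of_compact_support
    (hφ.2.1.fderiv_apply ℝ (EuclideanSpace.single i 1))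
  simp_rw [mul_comm (φ _)]
  rw [setIntegral_mul_eq_integral_of_tsupport_subset (hφ.tsupport_fderiv_subset _),
    setIntegral_mul_eq_integral_of_tsupport_subset hφ.2.2,
    integral_tsum_mul_mul ha hui (fun k ↦ (hu1 k).integral_abs_le)
      (hφ.continuous_fderiv _).aestronglyMeasurable hM',
    integral_tsum_mul_mul ha (fun k ↦ (hu k).integrable_fderiv _) (hdu1 i)
      hφ.1.continuous.aestronglyMeasurable hM, ← tsum_neg]
  refine tsum_congr fun k ↦ ?_
  rw [integral_mul_fderiv_eq_neg_of_contDiff (hu k).1 (hu k).2.1 hφ.1, mul_neg]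

end BoundedVariation

section HomeomorphicChange

variable {n : ℕ} {Ω Ω₁ Ω₂ : Set (En n)} {f g : En n → En n} {u : En n → ℝ}

lemma exists_smoothTest_eventuallyEq (hΩ : IsOpen Ω) {K : Set (En n)} (hK : IsCompact K)
    (hKΩ : K ⊆ Ω) {φ : En n → ℝ} (hφ : ContDiff ℝ (⊤ : ℕ∞) φ) :
    ∃ θ, SmoothTest Ω θ ∧ (∀ x, |θ x| ≤ |φ x|) ∧ ∀ x ∈ K, θ =ᶠ[𝓝 x] φ := by
  obtain ⟨L, hL, hKL, hLΩ⟩ := exists_compact_between hK hΩ hKΩ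
  obtain ⟨χ, hχ1, hχ0, hχ⟩ := exists_contMDiffMap_one_nhds_of_subset_interior
    (modelWithCornersSelf ℝ (En n)) (n := (⊤ : ℕ∞)) hK.isClosed hKL
  have hχL : tsupport χ ⊆ L :=
    closure_minimal (Function.support_subset_iff'.2 hχ0) hL.isClosed
  refine ⟨fun x ↦ χ x * φ x, ⟨χ.contMDiff.contDiff.mul hφ, ?_, ?_⟩, fun x ↦ ?_, fun x hx ↦ ?_⟩
  · exact HasCompactSupport.mul_right
      (.of_support_subset_isCompact hL ((subset_tsupport _).trans hχL))
  · exact tsupport_mul_subset_left.trans (hχL.trans hLΩ)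
  · rw [abs_mul, abs_of_nonneg (hχ x).1]
    exact mul_le_of_le_one_left (abs_nonneg _) (hχ x).2
  · filter_upwards [eventually_nhdsSet_iff_forall.1 hχ1 x hx] with y hy
    rw [hy, one_mul]

lemma IsHomeoOn.symm (hf : IsHomeoOn f g Ω₁ Ω₂) : IsHomeoOn g f Ω₂ Ω₁ :=
  let ⟨hfc, hgc, hfm, hgm, hgf, hfg⟩ := hf
  ⟨hgc, hfc, hgm, hfm, hfg, hgf⟩

lemma IsHomeoOn.isCompact_image_tsupport (hf : IsHomeoOn f g Ω₁ Ω₂) (hus : HasCompactSupport u)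
    (huΩ : tsupport u ⊆ Ω₂) : IsCompact (g '' tsupport u) :=
  hus.isCompact.image_of_continuousOn (hf.2.1.mono huΩ)

lemma IsHomeoOn.tsupport_indicator_comp_subset_image (hf : IsHomeoOn f g Ω₁ Ω₂)
    (hus : HasCompactSupport u) (huΩ : tsupport u ⊆ Ω₂) :
    tsupport (Ω₁.indicator (u ∘ f)) ⊆ g '' tsupport u := by
  refine closure_minimal (fun x hx ↦ ?_) (hf.isCompact_image_tsupport hus huΩ).isClosed
  have hxΩ : x ∈ Ω₁ := mem_of_indicator_ne_zero hx
  rw [Function.mem_support, indicator_of_mem hxΩ] at hx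
  exact ⟨f x, subset_tsupport _ hx, hf.2.2.2.2.1 x hxΩ⟩

lemma IsHomeoOn.hasCompactSupport_indicator_comp (hf : IsHomeoOn f g Ω₁ Ω₂)
    (hus : HasCompactSupport u) (huΩ : tsupport u ⊆ Ω₂) :
    HasCompactSupport (Ω₁.indicator (u ∘ f)) :=
  (hf.isCompact_image_tsupport hus huΩ).of_isClosed_subset (isClosed_tsupport _)
    (hf.tsupport_indicator_comp_subset_image hus huΩ)

lemma IsHomeoOn.tsupport_indicator_comp_subset (hf : IsHomeoOn f g Ω₁ Ω₂)
    (hus : HasCompactSupport u) (huΩ : tsupport u ⊆ Ω₂) :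
    tsupport (Ω₁.indicator (u ∘ f)) ⊆ Ω₁ :=
  (hf.tsupport_indicator_comp_subset_image hus huΩ).trans
    (hf.2.2.2.1.mono_left huΩ).image_subset

lemma IsHomeoOn.continuous_indicator_comp (hΩ₁ : IsOpen Ω₁) (hf : IsHomeoOn f g Ω₁ Ω₂)
    (hu : Continuous u) (hus : HasCompactSupport u) (huΩ : tsupport u ⊆ Ω₂) :
    Continuous (Ω₁.indicator (u ∘ f)) :=
  ((hu.comp_continuousOn hf.1).congr eqOn_indicator).continuous_of_tsupport_subset hΩ₁
    (hf.tsupport_indicator_comp_subset hus huΩ)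

end HomeomorphicChange

section UniformBound

variable {n : ℕ} {Ω₁ Ω₂ : Set (En n)} {f g : En n → En n}

lemma tsum_mul_setIntegral_comp_mul_fderiv (hΩ₁ : IsOpen Ω₁) (hf : ContinuousOn f Ω₁) {ι : Type*}
    [Countable ι] {u : ι → En n → ℝ} {a : ι → ℝ} (ha : Summable fun k ↦ |a k|)
    (hu : ∀ k, Continuous (u k)) (hu1 : ∀ k y, |u k y| ≤ 1) {θ : En n → ℝ}
    (hθ : SmoothTest Ω₁ θ) (v : En n) :
    ∑' k, a k * ∫ x in Ω₁, u k (f x) * fderiv ℝ θ x v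
      = ∫ x in Ω₁, (∑' k, a k * u k (f x)) * fderiv ℝ θ x v := by
  have hdθ := (hθ.integrable_fderiv v).restrict (s := Ω₁)
  have hF (k) : Integrable (fun x ↦ u k (f x) * fderiv ℝ θ x v) (volume.restrict Ω₁) :=
    hdθ.bdd_mul (((hu k).comp_continuousOn hf).aestronglyMeasurable hΩ₁.measurableSet)
      (.of_forall fun x ↦ hu1 k (f x))
  have hF1 (k) : ∫ x in Ω₁, |u k (f x) * fderiv ℝ θ x v| ≤ ∫ x in Ω₁, |fderiv ℝ θ x v| := by
    refine integral_mono (hF k).abs hdθ.abs fun x ↦ ?_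
    simp only [abs_mul]
    exact mul_le_of_le_one_left (abs_nonneg _) (hu1 k (f x))
  have h := integral_tsum_mul_mul ha hF hF1 (b := 1) (B := 1) aestronglyMeasurable_one (by simp)
  simp only [Pi.one_apply, mul_one, ← mul_assoc] at h
  simpa only [tsum_mul_right] using h.symm

lemma exists_forall_abs_setIntegral_comp_mul_fderiv_le (hΩ₁ : IsOpen Ω₁) (hΩ₂ : IsOpen Ω₂)
    (hf : ContinuousOn f Ω₁)
    (hT : ∀ u : En n → ℝ, MemCZero Ω₂ u → (∃ νu, MemBVs Ω₂ u νu) →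
      ∃ νc, MemBVs Ω₁ (u ∘ f) νc) (i : Fin n) :
    ∃ C : ℝ, ∀ u, SmoothTest Ω₂ u → CZeroBVNormLE volume u 1 →
      ∀ θ, SmoothTest Ω₁ θ → (∀ x, |θ x| ≤ 1) →
        |∫ x in Ω₁, u (f x) * fderiv ℝ θ x (EuclideanSpace.single i 1)| ≤ C := by
  by_contra! hunbounded
  choose u hu hu1 θ hθ hθ1 hlarge using fun m : ℕ ↦ hunbounded m
  have hdθ (m) := (hθ m).integrable_fderiv (EuclideanSpace.single i 1)
  obtain ⟨C, hC⟩ := exists_forall_abs_le_of_forall_tsum_bounded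
    (fun m k ↦ ∫ x in Ω₁, u k (f x) * fderiv ℝ (θ m) x (EuclideanSpace.single i 1))
    (fun m ↦ ⟨1 * ∫ x in Ω₁, |fderiv ℝ (θ m) x (EuclideanSpace.single i 1)|, fun k ↦
      abs_integral_mul_le_of_abs_le (hdθ m).restrict fun x ↦ (hu1 k).abs_le (f x)⟩)
    fun a ha ↦ by
      obtain ⟨ν, hν⟩ := hT _ (memCZero_tsum_mul hu (fun k ↦ (hu1 k).abs_le) ha)
        (exists_memBVs_tsum_mul hΩ₂ hu hu1 ha)
      refine ⟨ν.real univ, fun m ↦ ?_⟩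
      rw [tsum_mul_setIntegral_comp_mul_fderiv hΩ₁ hf ha (fun k ↦ (hu k).1.continuous)
        (fun k ↦ (hu1 k).abs_le) (hθ m)]
      exact hν.abs_setIntegral_mul_fderiv_le (hθ m) (hθ1 m) i
  obtain ⟨m, hm⟩ := exists_nat_gt C
  exact (hm.trans (hlarge m)).not_ge (hC m m)

lemma IsHomeoOn.variationLE_indicator_comp (hΩ₁ : IsOpen Ω₁) (hf : IsHomeoOn f g Ω₁ Ω₂)
    {v : En n} {u : En n → ℝ} (hus : HasCompactSupport u) (huΩ : tsupport u ⊆ Ω₂) {C : ℝ}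
    (hC : ∀ θ, SmoothTest Ω₁ θ → (∀ x, |θ x| ≤ 1) → |∫ x in Ω₁, u (f x) * fderiv ℝ θ x v| ≤ C) :
    VariationLE volume v (Ω₁.indicator (u ∘ f)) C := fun φ hφ hφ1 ↦ by
  obtain ⟨θ, hθ, hθφ, hθeq⟩ := exists_smoothTest_eventuallyEq hΩ₁
    (hf.hasCompactSupport_indicator_comp hus huΩ) (hf.tsupport_indicator_comp_subset hus huΩ) hφ
  convert hC θ hθ fun x ↦ (hθφ x).trans (hφ1 x) using 2
  rw [← integral_indicator hΩ₁.measurableSet]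
  refine integral_congr_ae (.of_forall fun x ↦ ?_)
  refine Eq.trans ?_ (indicator_mul_left Ω₁ (u ∘ f) fun x ↦ fderiv ℝ θ x v).symm
  by_cases hx : x ∈ tsupport (Ω₁.indicator (u ∘ f))
  · simp only [(hθeq x hx).fderiv_eq]
  · simp only [image_eq_zero_of_notMem_tsupport hx, zero_mul]

lemma exists_forall_variationLE_indicator_comp (hΩ₁ : IsOpen Ω₁) (hΩ₂ : IsOpen Ω₂)
    (hf : IsHomeoOn f g Ω₁ Ω₂)
    (hT : ∀ u : En n → ℝ, MemCZero Ω₂ u → (∃ νu, MemBVs Ω₂ u νu) →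
      ∃ νc, MemBVs Ω₁ (u ∘ f) νc) (i : Fin n) :
    ∃ C : ℝ, 0 ≤ C ∧ ∀ u A, SmoothTest Ω₂ u → 0 < A → CZeroBVNormLE volume u A →
      VariationLE volume (EuclideanSpace.single i 1) (Ω₁.indicator (u ∘ f)) (C * A) := by
  obtain ⟨C, hC⟩ := exists_forall_abs_setIntegral_comp_mul_fderiv_le hΩ₁ hΩ₂ hf.1 hT i
  refine ⟨|C|, abs_nonneg C, fun u A hu hA huA ↦ ?_⟩
  have hu1 : CZeroBVNormLE volume (fun y ↦ A⁻¹ * u y) 1 := by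
    simpa [hA.ne'] using huA.const_mul (hu.1.differentiable (by simp)) (inv_pos.2 hA).le
  have hu' : SmoothTest Ω₂ fun y ↦ A⁻¹ * u y :=
    ⟨contDiff_const.mul hu.1, hu.2.1.mul_left, tsupport_mul_subset_right.trans hu.2.2⟩
  have h := (hf.variationLE_indicator_comp hΩ₁ hu'.2.1 hu'.2.2 fun θ hθ hθ1 ↦
    (hC _ hu' hu1 θ hθ hθ1).trans (le_abs_self C)).const_mul hA.le
  convert h using 1
  · ext x
    by_cases hx : x ∈ Ω₁ <;> simp [hx, hA.ne']
  · exact mul_comm |C| A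

end UniformBound

section KeyEstimate

variable {n : ℕ} {Ω₁ Ω₂ : Set (En n)} {f g : En n → En n} {v : En n} {C : ℝ}

lemma IsHomeoOn.abs_integral_indicator_comp_mul_fderiv_le (hΩ₁ : IsOpen Ω₁)
    (hf : IsHomeoOn f g Ω₁ Ω₂)
    (hC : ∀ u A, SmoothTest Ω₂ u → 0 < A → CZeroBVNormLE volume u A →
      VariationLE volume v (Ω₁.indicator (u ∘ f)) (C * A))
    {p η φ : En n → ℝ} (hp : SmoothTest Ω₂ p) (hη : SmoothTest Ω₂ η)
    (hp1 : ∀ y ∈ tsupport η, ‖fderiv ℝ p y‖ ≤ 1) {V ε : ℝ}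
    (hV : VariationLE volume v (Ω₁.indicator (p ∘ f)) V)
    (hφ : SmoothTest Ω₁ φ) (hφη : ∀ x, |φ x - Ω₁.indicator (η ∘ f) x| ≤ ε) :
    |∫ x, Ω₁.indicator (p ∘ f) x * fderiv ℝ φ x v| ≤ 2 * C * (∫ y, |η y|) + ε * V := by
  obtain ⟨Q, hQ, hηQ⟩ := exists_cZeroBVNormLE (μ := volume) hη.1.continuous hη.2.1
  have hη1 : ContDiff ℝ 1 η := hη.1.of_le (by simp)
  have hpd : Differentiable ℝ p := hp.1.differentiable (by simp)
  refine le_of_forall_pos_le_add_mul (c := 2 * C * Q) fun τ hτ _ ↦ ?_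
  have hcomp (h : ℝ → ℝ) (hh : ContDiff ℝ (⊤ : ℕ∞) h)
      (hhη : CZeroBVNormLE volume (fun y ↦ h (p y) * η y) ((∫ y, |η y|) + τ * Q)) :
      VariationLE volume v (fun x ↦ h (Ω₁.indicator (p ∘ f) x) * Ω₁.indicator (η ∘ f) x)
        (C * ((∫ y, |η y|) + τ * Q)) := by
    convert hC _ _ ⟨(hh.comp hp.1).mul hη.1, hη.2.1.mul_left,
      tsupport_mul_subset_right.trans hη.2.2⟩ (by positivity) hhη using 1
    ext x
    by_cases hx : x ∈ Ω₁ <;> simp [hx]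
  have hcos := hηQ.inv_mul_cos_mul (inv_pos.2 hτ) hpd hη1 hη.2.1 hp1
  have hsin := hηQ.inv_mul_sin_mul (inv_pos.2 hτ) hpd hη1 hη.2.1 hp1
  rw [inv_inv] at hcos hsin
  have key := VariationLE.abs_integral_mul_fderiv_le (inv_pos.2 hτ).ne'
    (by rw [inv_inv]; exact hcomp (fun t ↦ τ * Real.cos (τ⁻¹ * t)) (by fun_prop) hcos)
    (by rw [inv_inv]; exact hcomp (fun t ↦ τ * Real.sin (τ⁻¹ * t)) (by fun_prop) hsin) hV
    (hf.continuous_indicator_comp hΩ₁ hp.1.continuous hp.2.1 hp.2.2)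
    (hf.hasCompactSupport_indicator_comp hp.2.1 hp.2.2)
    (hf.continuous_indicator_comp hΩ₁ hη.1.continuous hη.2.1 hη.2.2)
    (hf.hasCompactSupport_indicator_comp hη.2.1 hη.2.2) hφ.1 hφ.2.1 hφη
  linarith

lemma exists_smoothTest_abs_sub_le {Ω : Set (En n)} {ψ : En n → ℝ} (hψ : Continuous ψ)
    (hψs : HasCompactSupport ψ) (hψΩ : tsupport ψ ⊆ Ω) {ε : ℝ} (hε : 0 < ε) :
    ∃ η, SmoothTest Ω η ∧ tsupport η ⊆ tsupport ψ ∧ (∀ y, |η y - ψ y| ≤ ε) ∧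
      ∫ y, |η y| ≤ (∫ y, |ψ y|) + ε * volume.real (tsupport ψ) := by
  obtain ⟨η, hη, hηψ, hsupp⟩ := hψ.exists_contDiff_approx (⊤ : ℕ∞) (ε := fun _ ↦ ε)
    continuous_const fun _ ↦ hε
  have hts : tsupport η ⊆ tsupport ψ := closure_mono hsupp
  have hηs : HasCompactSupport η := hψs.mono hsupp
  have hηψ' (y) : |η y - ψ y| ≤ ε := (hηψ y).le
  refine ⟨η, ⟨hη, hηs, hts.trans hψΩ⟩, hts, hηψ', ?_⟩
  have hψi : Integrable (fun y ↦ |ψ y|) := (hψ.integrable_of_hasCompactSupport hψs).abs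
  have hηi : Integrable (fun y ↦ |η y|) := (hη.continuous.integrable_of_hasCompactSupport hηs).abs
  have hεi : IntegrableOn (fun _ ↦ ε) (tsupport ψ) :=
    integrableOn_const hψs.isCompact.measure_lt_top.ne
  calc ∫ y, |η y| = ∫ y in tsupport ψ, |η y| :=
        (setIntegral_eq_integral_of_forall_compl_eq_zero fun y hy ↦ by
          rw [image_eq_zero_of_notMem_tsupport fun h ↦ hy (hts h), abs_zero]).symm
    _ ≤ ∫ y in tsupport ψ, (|ψ y| + ε) :=
        integral_mono hηi.integrableOn (hψi.integrableOn.add hεi) fun y ↦ by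
          linarith [abs_sub_abs_le_abs_sub (η y) (ψ y), hηψ' y]
    _ = (∫ y in tsupport ψ, |ψ y|) + ε * volume.real (tsupport ψ) := by
        rw [integral_add hψi.integrableOn hεi, setIntegral_const, smul_eq_mul, mul_comm ε]
    _ ≤ (∫ y, |ψ y|) + ε * volume.real (tsupport ψ) := by
        gcongr ?_ + _
        exact setIntegral_le_integral hψi (.of_forall fun y ↦ abs_nonneg _)

lemma SmoothTest.setIntegral_mul_fderiv_eq_integral_indicator {φ w q : En n → ℝ}
    (hφ : SmoothTest Ω₁ φ) (hwq : EqOn w q (tsupport φ)) :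
    ∫ x in Ω₁, w x * fderiv ℝ φ x v = ∫ x, Ω₁.indicator q x * fderiv ℝ φ x v := by
  rw [setIntegral_mul_eq_integral_of_tsupport_subset (hφ.tsupport_fderiv_subset v)]
  congr 1 with x
  by_cases hx : x ∈ tsupport φ
  · rw [hwq hx, indicator_of_mem (hφ.2.2 hx)]
  · simp [fderiv_of_notMem_tsupport ℝ hx]

lemma IsHomeoOn.abs_setIntegral_apply_mul_fderiv_le (hΩ₁ : IsOpen Ω₁) (hΩ₂ : IsOpen Ω₂)
    (hf : IsHomeoOn f g Ω₁ Ω₂)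
    (hC : ∀ u A, SmoothTest Ω₂ u → 0 < A → CZeroBVNormLE volume u A →
      VariationLE volume v (Ω₁.indicator (u ∘ f)) (C * A))
    (ℓ : En n →L[ℝ] ℝ) (hℓ : ‖ℓ‖ ≤ 1) {φ : En n → ℝ} (hφ : SmoothTest Ω₁ φ) :
    |∫ x in Ω₁, ℓ (f x) * fderiv ℝ φ x v| ≤ 2 * C * ∫ y, |Ω₂.indicator (φ ∘ g) y| := by
  obtain ⟨-, -, hfm, -, hgf, -⟩ := id hf
  set ψ := Ω₂.indicator (φ ∘ g)
  have hψ : Continuous ψ := hf.symm.continuous_indicator_comp hΩ₂ hφ.1.continuous hφ.2.1 hφ.2.2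
  have hψs : HasCompactSupport ψ := hf.symm.hasCompactSupport_indicator_comp hφ.2.1 hφ.2.2
  have hψΩ : tsupport ψ ⊆ Ω₂ := hf.symm.tsupport_indicator_comp_subset hφ.2.1 hφ.2.2
  have hψφ : tsupport ψ ⊆ f '' tsupport φ :=
    hf.symm.tsupport_indicator_comp_subset_image hφ.2.1 hφ.2.2
  obtain ⟨p, hp, -, hpℓ⟩ := exists_smoothTest_eventuallyEq hΩ₂
    (hf.symm.isCompact_image_tsupport hφ.2.1 hφ.2.2) (hfm.mono_left hφ.2.2).image_subset ℓ.contDiff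
  obtain ⟨A, hA, hpA⟩ := exists_cZeroBVNormLE (μ := volume) hp.1.continuous hp.2.1
  have hpV := hC p A hp hA hpA
  have hC0 : 0 ≤ C := nonneg_of_mul_nonneg_left hpV.nonneg hA
  rw [hφ.setIntegral_mul_fderiv_eq_integral_indicator (q := p ∘ f)
    fun x hx ↦ (hpℓ _ (mem_image_of_mem f hx)).eq_of_nhds.symm]
  refine le_of_forall_pos_le_add_mul (c := 2 * C * volume.real (tsupport ψ) + C * A)
    fun ε hε _ ↦ ?_
  obtain ⟨η, hη, hts, hηψ, hηint⟩ := exists_smoothTest_abs_sub_le hψ hψs hψΩ hε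
  have hφη (x) : |φ x - Ω₁.indicator (η ∘ f) x| ≤ ε := by
    by_cases hx : x ∈ Ω₁
    · have hφψ : φ x = ψ (f x) := by
        simp only [ψ, indicator_of_mem (hfm hx), Function.comp_apply, hgf x hx]
      rw [indicator_of_mem hx, hφψ, abs_sub_comm]
      exact hηψ (f x)
    · rw [indicator_of_notMem hx, image_eq_zero_of_notMem_tsupport fun h ↦ hx (hφ.2.2 h)]
      simpa using hε.le
  have hp1 (y) (hy : y ∈ tsupport η) : ‖fderiv ℝ p y‖ ≤ 1 := by
    rwa [(hpℓ y (hψφ (hts hy))).fderiv_eq, ℓ.fderiv]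
  calc |∫ x, Ω₁.indicator (p ∘ f) x * fderiv ℝ φ x v|
    _ ≤ 2 * C * (∫ y, |η y|) + ε * (C * A) :=
        hf.abs_integral_indicator_comp_mul_fderiv_le hΩ₁ hC hp hη hp1 hpV hφ hφη
    _ ≤ 2 * C * ((∫ y, |ψ y|) + ε * volume.real (tsupport ψ)) + ε * (C * A) := by gcongr
    _ = _ := by ring

end KeyEstimate

section RadonNikodym

variable {n m : ℕ} {Ω : Set (En n)} {μ : Measure (En n)}

/-- The real vector space `C_c^∞(Ω)` of test functions, as a subspace of all functions. -/
def testFunctions (Ω : Set (En n)) : Submodule ℝ (En n → ℝ) where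
  carrier := {φ | SmoothTest Ω φ}
  add_mem' hφ hψ := ⟨hφ.1.add hψ.1, hφ.2.1.add hψ.2.1,
    (tsupport_add _ _).trans (union_subset hφ.2.2 hψ.2.2)⟩
  zero_mem' := ⟨contDiff_const, .zero, by simp⟩
  smul_mem' _ _ hφ := ⟨contDiff_const.mul hφ.1, hφ.2.1.mul_left,
    tsupport_mul_subset_right.trans hφ.2.2⟩

lemma SmoothTest.integrable {φ : En n → ℝ} (hφ : SmoothTest Ω φ)
    (hμ : ∀ C, IsCompact C → C ⊆ Ω → μ C < ∞) : Integrable φ μ :=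
  (integrableOn_iff_integrable_of_support_subset (subset_tsupport φ)).1 <|
    hφ.1.continuous.continuousOn.integrableOn_of_subset_isCompact hφ.2.1.isCompact
      (isClosed_tsupport φ).measurableSet subset_rfl (hμ _ hφ.2.1 hφ.2.2).ne

lemma SmoothTest.integrable_mul_fderiv {φ w : En n → ℝ} (hφ : SmoothTest Ω φ)
    (hw : LocallyIntegrableOn w Ω) (v : En n) :
    Integrable fun x ↦ w x * fderiv ℝ φ x v := by
  have hint : IntegrableOn (fun x ↦ w x * fderiv ℝ φ x v) (tsupport φ) :=
    (hw.integrableOn_compact_subset hφ.2.2 hφ.2.1).mul_continuousOn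
      (hφ.continuous_fderiv v).continuousOn hφ.2.1
  refine (integrableOn_iff_integrable_of_support_subset fun x hx ↦ ?_).1 hint
  exact tsupport_fderiv_apply_subset ℝ v (subset_tsupport _ (right_ne_zero_of_mul hx))

/-- The distributional derivative of `w` in the direction `v`, as a linear functional. -/
def weakDeriv (w : En n → ℝ) (hw : LocallyIntegrableOn w Ω) (v : En n) :
    testFunctions Ω →ₗ[ℝ] ℝ where
  toFun φ := -∫ x in Ω, w x * fderiv ℝ φ x v
  map_add' φ ψ := by
    have hadd (x) : fderiv ℝ (φ + ψ : En n → ℝ) x v = fderiv ℝ φ x v + fderiv ℝ ψ x v := by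
      rw [fderiv_add (φ.2.1.differentiable (by simp) x) (ψ.2.1.differentiable (by simp) x),
        add_apply]
    simp only [Submodule.coe_add, hadd, mul_add]
    rw [integral_add (φ.2.integrable_mul_fderiv hw v).integrableOn
      (ψ.2.integrable_mul_fderiv hw v).integrableOn, neg_add]
  map_smul' c φ := by
    have hsmul (x) : fderiv ℝ (c • φ : En n → ℝ) x v = c * fderiv ℝ φ x v := by
      rw [fderiv_const_smul_field, Pi.smul_apply, smul_apply, smul_eq_mul]
    simp only [Submodule.coe_smul, hsmul, mul_left_comm _ c, integral_const_mul, RingHom.id_apply,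
      smul_eq_mul, mul_neg]

lemma exists_bounded_density_of_abs_setIntegral_mul_fderiv_le [SigmaFinite μ]
    (hμ : ∀ C, IsCompact C → C ⊆ Ω → μ C < ∞) {w : En n → ℝ} (hw : LocallyIntegrableOn w Ω)
    {v : En n} {K : ℝ} (hK : 0 ≤ K)
    (hwK : ∀ φ, SmoothTest Ω φ → |∫ x in Ω, w x * fderiv ℝ φ x v| ≤ K * ∫ x, |φ x| ∂μ) :
    ∃ h : En n → ℝ, Measurable h ∧ (∀ x, |h x| ≤ K) ∧ ∀ φ, SmoothTest Ω φ →
      ∫ x in Ω, w x * fderiv ℝ φ x v = -∫ x, φ x * h x ∂μ := by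
  obtain ⟨h, hm, hle, hrepr⟩ := exists_bounded_density_of_forall_abs_le_integral
    (testFunctions Ω).subtype (fun φ ↦ φ.2.integrable hμ) (weakDeriv w hw v) hK
    fun φ ↦ (abs_neg _).trans_le (hwK φ φ.2)
  exact ⟨h, hm, hle, fun φ hφ ↦ neg_eq_iff_eq_neg.1 (hrepr ⟨φ, hφ⟩)⟩

lemma exists_isVariationMeasure_of_density (hμ : μ Ωᶜ = 0) {f : En n → En m}
    {h : Fin m → Fin n → En n → ℝ} (hm : ∀ j i, Measurable (h j i))
    {K : Fin m → Fin n → ℝ} (hK : ∀ j i x, |h j i x| ≤ K j i)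
    (hrepr : ∀ j i φ, SmoothTest Ω φ →
      ∫ x in Ω, f x j * fderiv ℝ φ x (EuclideanSpace.single i 1) = -∫ x, φ x * h j i x ∂μ) :
    ∃ σ ν, IsVariationMeasure Ω f σ ν ∧ ν ≤ ENNReal.ofReal (∑ j, ∑ i, K j i) • μ := by
  set H : En n → Fin m × Fin n → ℝ := fun x q ↦ h q.1 q.2 x
  obtain ⟨σ, hσ, hσ1, hσH⟩ := exists_polar_decomposition μ (H := H)
    (measurable_pi_lambda _ fun q ↦ hm q.1 q.2)
  have hHK (x) : √(∑ q, H x q ^ 2) ≤ ∑ j, ∑ i, K j i := by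
    rw [← Fintype.sum_prod_type']
    exact (sqrt_sum_sq_le_sum_abs _).trans (Finset.sum_le_sum fun q _ ↦ hK q.1 q.2 x)
  have hle : μ.withDensity (fun x ↦ ENNReal.ofReal √(∑ q, H x q ^ 2))
      ≤ ENNReal.ofReal (∑ j, ∑ i, K j i) • μ := by
    rw [← withDensity_const]
    exact withDensity_mono (.of_forall fun x ↦ ENNReal.ofReal_le_ofReal (hHK x))
  refine ⟨fun x j i ↦ σ x (j, i), _, ⟨?_, ?_, ?_, fun φ hφ j i ↦ ?_⟩, hle⟩
  · exact measurable_pi_lambda _ fun j ↦ measurable_pi_lambda _ fun i ↦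
      (measurable_pi_apply (j, i)).comp hσ
  · simpa only [frobNorm, Fintype.sum_prod_type] using hσ1
  · exact withDensity_absolutelyContinuous μ _ hμ
  · rw [hσH, hrepr j i φ hφ]

lemma exists_memBVloc_of_forall_abs_setIntegral_mul_fderiv_le [SigmaFinite μ]
    (hμ : ∀ C, IsCompact C → C ⊆ Ω → μ C < ∞) (hμΩ : μ Ωᶜ = 0) {f : En n → En m}
    (hf : LocallyIntegrableOn f Ω) {K : Fin m → Fin n → ℝ} (hK : ∀ j i, 0 ≤ K j i)
    (hfK : ∀ j i φ, SmoothTest Ω φ →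
      |∫ x in Ω, f x j * fderiv ℝ φ x (EuclideanSpace.single i 1)| ≤ K j i * ∫ x, |φ x| ∂μ) :
    ∃ ν, MemBVloc Ω f ν ∧ ν ≤ ENNReal.ofReal (∑ j, ∑ i, K j i) • μ := by
  have hfj (j) : LocallyIntegrableOn (fun x ↦ f x j) Ω := fun x hx ↦
    let ⟨s, hs, hfs⟩ := hf x hx
    ⟨s, hs, (EuclideanSpace.proj (𝕜 := ℝ) j : En m →L[ℝ] ℝ).integrable_comp hfs⟩
  choose h hm hhK hrepr using fun j i ↦
    exists_bounded_density_of_abs_setIntegral_mul_fderiv_le hμ (hfj j) (hK j i) (hfK j i)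
  obtain ⟨σ, ν, hν, hle⟩ := exists_isVariationMeasure_of_density hμΩ hm hhK hrepr
  exact ⟨ν, ⟨hf, fun C hC hCΩ ↦ (hle C).trans_lt <|
    ENNReal.mul_lt_top ENNReal.ofReal_lt_top (hμ C hC hCΩ), σ, hν⟩, hle⟩

end RadonNikodym

section MeasurePullback

variable {n : ℕ} {Ω₁ Ω₂ : Set (En n)} {f g : En n → En n} {ν : Measure (En n)}

lemma IsHomeoOn.map_restrict_compl_eq_zero (hΩ₁ : IsOpen Ω₁) (hΩ₂ : IsOpen Ω₂)
    (hf : IsHomeoOn f g Ω₁ Ω₂) : (ν.restrict Ω₂).map g Ω₁ᶜ = 0 := by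
  obtain ⟨-, hg, -, hgm, -, -⟩ := hf
  rw [Measure.map_apply_of_aemeasurable (hg.aemeasurable hΩ₂.measurableSet)
    hΩ₁.measurableSet.compl, Measure.restrict_apply' hΩ₂.measurableSet, preimage_compl,
    (disjoint_compl_left_iff_subset.2 hgm.subset_preimage).inter_eq, measure_empty]

lemma IsHomeoOn.aemeasurable_map_restrict (hΩ₁ : IsOpen Ω₁) (hΩ₂ : IsOpen Ω₂)
    (hf : IsHomeoOn f g Ω₁ Ω₂) : AEMeasurable f ((ν.restrict Ω₂).map g) := by
  rw [← Measure.restrict_eq_self_of_ae_mem (s := Ω₁) (μ := (ν.restrict Ω₂).map g)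
    (hf.map_restrict_compl_eq_zero hΩ₁ hΩ₂)]
  exact hf.1.aemeasurable hΩ₁.measurableSet

lemma IsHomeoOn.map_map_restrict (hΩ₁ : IsOpen Ω₁) (hΩ₂ : IsOpen Ω₂)
    (hf : IsHomeoOn f g Ω₁ Ω₂) : ((ν.restrict Ω₂).map g).map f = ν.restrict Ω₂ := by
  rw [(hf.aemeasurable_map_restrict hΩ₁ hΩ₂).map_map_of_aemeasurable
    (hf.2.1.aemeasurable hΩ₂.measurableSet)]
  refine (Measure.map_congr ?_).trans Measure.map_id
  exact (ae_restrict_mem hΩ₂.measurableSet).mono hf.2.2.2.2.2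

lemma IsHomeoOn.sigmaFinite_map_restrict [SigmaFinite ν] (hΩ₁ : IsOpen Ω₁) (hΩ₂ : IsOpen Ω₂)
    (hf : IsHomeoOn f g Ω₁ Ω₂) : SigmaFinite ((ν.restrict Ω₂).map g) :=
  .of_map _ (hf.aemeasurable_map_restrict hΩ₁ hΩ₂) <| by
    rw [hf.map_map_restrict hΩ₁ hΩ₂]
    infer_instance

lemma IsHomeoOn.map_restrict_lt_top_of_isCompact [IsFiniteMeasureOnCompacts ν] (hΩ₂ : IsOpen Ω₂)
    (hf : IsHomeoOn f g Ω₁ Ω₂) {C : Set (En n)} (hC : IsCompact C) (hCΩ : C ⊆ Ω₁) :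
    (ν.restrict Ω₂).map g C < ∞ := by
  obtain ⟨hfc, hgc, -, -, -, hfg⟩ := hf
  rw [Measure.map_apply_of_aemeasurable (hgc.aemeasurable hΩ₂.measurableSet) hC.measurableSet,
    Measure.restrict_apply' hΩ₂.measurableSet]
  refine (measure_mono fun y hy ↦ ?_).trans_lt
    (hC.image_of_continuousOn (hfc.mono hCΩ)).measure_lt_top
  exact ⟨g y, hy.1, hfg y hy.2⟩

lemma IsHomeoOn.map_restrict_preimage_le (hΩ₁ : IsOpen Ω₁) (hΩ₂ : IsOpen Ω₂)
    (hf : IsHomeoOn f g Ω₁ Ω₂) {A : Set (En n)} (hA : MeasurableSet A) :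
    (ν.restrict Ω₂).map g (f ⁻¹' A) ≤ ν A := by
  rw [← Measure.map_apply_of_aemeasurable (hf.aemeasurable_map_restrict hΩ₁ hΩ₂) hA,
    hf.map_map_restrict hΩ₁ hΩ₂]
  exact Measure.restrict_apply_le Ω₂ A

lemma IsHomeoOn.integral_map_restrict (hΩ₂ : IsOpen Ω₂) (hf : IsHomeoOn f g Ω₁ Ω₂)
    {φ : En n → ℝ} (hφ : Continuous φ) :
    ∫ x, |φ x| ∂(ν.restrict Ω₂).map g = ∫ y, |Ω₂.indicator (φ ∘ g) y| ∂ν := by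
  rw [integral_map (hf.2.1.aemeasurable hΩ₂.measurableSet) hφ.abs.aestronglyMeasurable,
    ← integral_indicator hΩ₂.measurableSet]
  simp only [← Real.norm_eq_abs, norm_indicator_eq_indicator_norm, Function.comp_apply]

end MeasurePullback

/-- **Theorem (Statement 1).** If `f : Ω₁ → Ω₂` is a homeomorphism such that
`T_f(u) = u ∘ f` maps `C₀(Ω₂) ∩ BV(Ω₂)` into `BV(Ω₁)`, then `f ∈ BV_loc(Ω₁, Ω₂)` and
there is `K > 0` with `|Df|(f⁻¹(A)) ≤ K·Lⁿ(A)` for all Borel `A ⊆ Ω₂`. -/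
theorem necessity_of_variation_bound {n : ℕ}
    (Ω₁ Ω₂ : Set (En n)) (hΩ₁ : IsOpen Ω₁) (hΩ₂ : IsOpen Ω₂)
    (f g : En n → En n) (hf : IsHomeoOn f g Ω₁ Ω₂)
    (hT : ∀ u : En n → ℝ, MemCZero Ω₂ u → (∃ νu, MemBVs Ω₂ u νu) →
      ∃ νc, MemBVs Ω₁ (u ∘ f) νc) :
    ∃ νf : Measure (En n), MemBVloc Ω₁ f νf ∧
      ∃ K : ℝ, 0 < K ∧ ∀ A : Set (En n), A ⊆ Ω₂ → MeasurableSet A →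
        νf (f ⁻¹' A ∩ Ω₁) ≤ ENNReal.ofReal K * volume A := by
  choose C hC0 hC using exists_forall_variationLE_indicator_comp hΩ₁ hΩ₂ hf hT
  set μ := (volume.restrict Ω₂).map g
  have : SigmaFinite μ := hf.sigmaFinite_map_restrict hΩ₁ hΩ₂
  have hproj (j : Fin n) : ‖(EuclideanSpace.proj j : En n →L[ℝ] ℝ)‖ ≤ 1 :=
    ContinuousLinearMap.opNorm_le_bound _ zero_le_one fun y ↦ by simpa using PiLp.norm_apply_le y j
  have hder (j i : Fin n) (φ) (hφ : SmoothTest Ω₁ φ) :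
      |∫ x in Ω₁, f x j * fderiv ℝ φ x (EuclideanSpace.single i 1)| ≤ 2 * C i * ∫ x, |φ x| ∂μ := by
    rw [hf.integral_map_restrict hΩ₂ hφ.1.continuous]
    exact hf.abs_setIntegral_apply_mul_fderiv_le hΩ₁ hΩ₂ (hC i) _ (hproj j) hφ
  obtain ⟨νf, hνf, hle⟩ := exists_memBVloc_of_forall_abs_setIntegral_mul_fderiv_le
    (fun _ ↦ hf.map_restrict_lt_top_of_isCompact hΩ₂) (hf.map_restrict_compl_eq_zero hΩ₁ hΩ₂)
    (hf.1.locallyIntegrableOn hΩ₁.measurableSet)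
    (fun _ i ↦ mul_nonneg zero_le_two (hC0 i)) hder
  set N := ∑ _j : Fin n, ∑ i, 2 * C i
  have hN : 0 ≤ N := Finset.sum_nonneg fun _ _ ↦ Finset.sum_nonneg fun i _ ↦ by linarith [hC0 i]
  refine ⟨νf, hνf, N + 1, by positivity, fun A _ hA ↦ ?_⟩
  calc νf (f ⁻¹' A ∩ Ω₁)
    _ ≤ ENNReal.ofReal N * μ (f ⁻¹' A) := (measure_mono inter_subset_left).trans (hle _)
    _ ≤ ENNReal.ofReal (N + 1) * volume A :=
      mul_le_mul' (ENNReal.ofReal_le_ofReal (by linarith))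
        (hf.map_restrict_preimage_le hΩ₁ hΩ₂ hA)
end
end

section
/- Let f belong to BV(Ω, ℝⁿ), have no jump part, and satisfy f(z) = applim_{x→z} f(x) at every point z ∈ supp|D^c f| at which the approximate limit exists. Then the condition |Df|(f̃⁻¹(A)) ≤ K·Lⁿ(A) for all Borel sets A ⊆ Ω₂ holds if and only if |Df|(f⁻¹(A)) ≤ K·Lⁿ(A) for all Borel sets A ⊆ Ω₂. -/
open MeasureTheory Metric Set Filter
open scoped ENNReal Topology NNReal

noncomputable section

/-!
Almost every point of `Ω` is a Lebesgue point of `f`, so off `S`, where `ν ≪ Lⁿ`, the approximate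
limit of `f` is `f x` at `ν`-almost every `x`. On `S` the approximate limit exists `ν`-almost
everywhere because there is no jump part, and there it equals `f x` by hypothesis. Approximate
limits being unique, `f̃⁻¹(A)` and `f⁻¹(A)` differ in `Ω` by a `ν`-null set for every `A`.
-/

theorem norm_sub_le_average_add_average {α E : Type*} [MeasurableSpace α] [NormedAddCommGroup E]
    {μ : Measure α} [IsFiniteMeasure μ] [NeZero μ] {f : α → E} (hf : Integrable f μ) (z w : E) :
    ‖z - w‖ ≤ (⨍ y, ‖f y - z‖ ∂μ) + ⨍ y, ‖f y - w‖ ∂μ := by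
  have hint (c : E) : Integrable (fun y ↦ ‖f y - c‖) ((μ univ)⁻¹ • μ) :=
    (hf.sub (integrable_const c)).norm.to_average
  calc ‖z - w‖ = ⨍ _, ‖z - w‖ ∂μ := (average_const μ _).symm
    _ ≤ ⨍ y, ‖f y - z‖ + ‖f y - w‖ ∂μ :=
        integral_mono (integrable_const _) ((hint z).add (hint w)) fun y ↦ by
          simpa only [dist_eq_norm, norm_sub_rev z] using dist_triangle z (f y) w
    _ = (⨍ y, ‖f y - z‖ ∂μ) + ⨍ y, ‖f y - w‖ ∂μ := integral_add (hint z) (hint w)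

theorem ball_ae_eq_closedBall {E : Type*} [NormedAddCommGroup E] [NormedSpace ℝ E]
    [MeasurableSpace E] [BorelSpace E] [FiniteDimensional ℝ E] (μ : Measure E) [μ.IsAddHaarMeasure]
    (x : E) {r : ℝ} (hr : r ≠ 0) : ball x r =ᵐ[μ] closedBall x r := by
  rw [← ball_union_sphere]
  exact (union_ae_eq_left_of_ae_eq_empty
    (ae_eq_empty.2 (Measure.addHaar_sphere_of_ne_zero μ x hr))).symm

section ApproxLimAt

variable {n m : ℕ} {f g : En n → En m} {x : En n} {z w : En m}

theorem approxLimAt_iff_tendsto_setAverage_closedBall :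
    ApproxLimAt f x z ↔
      Tendsto (fun r ↦ ⨍ y in closedBall x r, ‖f y - z‖) (𝓝[>] 0) (𝓝 0) := by
  refine tendsto_congr' ?_
  filter_upwards [self_mem_nhdsWithin] with r (hr : 0 < r)
  rw [← setAverage_congr (ball_ae_eq_closedBall volume x hr.ne'), setAverage_eq, smul_eq_mul,
    div_eq_inv_mul, Measure.real]

theorem ApproxLimAt.congr_of_eventuallyEq (hf : ApproxLimAt f x z) (hfg : f =ᶠ[𝓝 x] g) :
    ApproxLimAt g x z := by
  refine Tendsto.congr' ?_ hf
  filter_upwards [(eventually_ball_subset hfg).filter_mono nhdsWithin_le_nhds] with r hr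
  congr 1
  refine setIntegral_congr_fun measurableSet_ball fun y hy ↦ ?_
  simp only [show f y = g y from hr hy]

-- Pitfall: where `f` is integrable on no ball around `x`, the junk value `0` of the Bochner
-- integral can make every `z` an approximate limit.
theorem ApproxLimAt.unique (hf : IntegrableAtFilter f (𝓝 x)) (hz : ApproxLimAt f x z)
    (hw : ApproxLimAt f x w) : z = w := by
  rw [approxLimAt_iff_tendsto_setAverage_closedBall] at hz hw
  obtain ⟨s, hs, hfs⟩ := hf
  have hle : ‖z - w‖ ≤ 0 + 0 := by
    refine ge_of_tendsto (hz.add hw) ?_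
    filter_upwards [(eventually_closedBall_subset hs).filter_mono nhdsWithin_le_nhds,
      self_mem_nhdsWithin] with r hrs hr
    have : IsFiniteMeasure (volume.restrict (closedBall x r)) :=
      isFiniteMeasure_restrict.2 measure_closedBall_lt_top.ne
    have : NeZero (volume.restrict (closedBall x r)) :=
      ⟨Measure.restrict_eq_zero.not.2 (measure_closedBall_pos volume x hr).ne'⟩
    exact norm_sub_le_average_add_average (hfs.mono_set hrs) z w
  rw [add_zero, norm_le_zero_iff] at hle
  exact sub_eq_zero.1 hle

theorem ApproxLimAt.mem_tildePreimage_iff (hx : ApproxLimAt f x (f x))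
    (hf : IntegrableAtFilter f (𝓝 x)) {A : Set (En m)} : x ∈ tildePreimage f A ↔ f x ∈ A :=
  ⟨fun ⟨_, hzA, hz⟩ ↦ hx.unique hf hz ▸ hzA, fun hfx ↦ ⟨f x, hfx, hx⟩⟩

end ApproxLimAt

section LebesguePoints

variable {n m : ℕ} {f : En n → En m} {Ω : Set (En n)}

theorem ae_approxLimAt_self (hf : LocallyIntegrable f) : ∀ᵐ x, ApproxLimAt f x (f x) := by
  filter_upwards [(Besicovitch.vitaliFamily volume).ae_tendsto_average_norm_sub hf] with x hx
  exact approxLimAt_iff_tendsto_setAverage_closedBall.2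
    (hx.comp (Besicovitch.tendsto_filterAt volume x))

theorem ae_approxLimAt_self_of_integrableOn (hΩ : IsOpen Ω) (hf : IntegrableOn f Ω) :
    ∀ᵐ x, x ∈ Ω → ApproxLimAt f x (f x) := by
  filter_upwards [ae_approxLimAt_self
    (hf.integrable_indicator hΩ.measurableSet).locallyIntegrable] with x hx hxΩ
  rw [indicator_of_mem hxΩ] at hx
  exact hx.congr_of_eventuallyEq (eqOn_indicator.eventuallyEq_of_mem (hΩ.mem_nhds hxΩ))

theorem ae_approxLimAt_self_of_locallyIntegrableOn (hΩ : IsOpen Ω)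
    (hf : LocallyIntegrableOn f Ω) : ∀ᵐ x, x ∈ Ω → ApproxLimAt f x (f x) := by
  obtain ⟨u, huo, hΩu, hfu⟩ := hf.exists_nat_integrableOn
  have hu : ∀ᵐ x, ∀ i, x ∈ u i ∩ Ω → ApproxLimAt f x (f x) :=
    ae_all_iff.2 fun i ↦ ae_approxLimAt_self_of_integrableOn ((huo i).inter hΩ) (hfu i)
  filter_upwards [hu] with x hx hxΩ
  obtain ⟨i, hi⟩ := mem_iUnion.1 (hΩu hxΩ)
  exact hx i ⟨hi, hxΩ⟩

end LebesguePoints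

section VariationMeasure

variable {n m : ℕ} {f : En n → En m} {Ω S : Set (En n)} {ν : Measure (En n)}

theorem MemBV.memBVloc (hf : MemBV Ω f ν) : MemBVloc Ω f ν :=
  ⟨hf.1.locallyIntegrableOn, fun _ _ hC ↦ (measure_mono hC).trans_lt hf.2.1, hf.2.2⟩

theorem NoJumpPart.ae_approxLimAt_self (hjump : NoJumpPart f ν) (hΩ : IsOpen Ω)
    (hf : LocallyIntegrableOn f Ω) (hS : ν.restrict Sᶜ ≪ volume)
    (hfS : ∀ z ∈ S, ∀ w, ApproxLimAt f z w → f z = w) :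
    ∀ᵐ x ∂ν, x ∈ Ω → ApproxLimAt f x (f x) := by
  have hexists : ∀ᵐ x ∂ν, ∃ z, ApproxLimAt f x z := hjump
  have hoffS : ∀ᵐ x ∂ν, x ∈ Sᶜ → x ∈ Ω → ApproxLimAt f x (f x) :=
    ae_imp_of_ae_restrict (hS.ae_le (ae_approxLimAt_self_of_locallyIntegrableOn hΩ hf))
  filter_upwards [hexists, hoffS] with x ⟨z, hz⟩ hx hxΩ
  by_cases hxS : x ∈ S
  · rwa [hfS x hxS z hz]
  · exact hx hxS hxΩ

theorem tildePreimage_inter_ae_eq_preimage_inter (hΩ : IsOpen Ω) (hf : LocallyIntegrableOn f Ω)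
    (hlim : ∀ᵐ x ∂ν, x ∈ Ω → ApproxLimAt f x (f x)) (A : Set (En m)) :
    (tildePreimage f A ∩ Ω : Set (En n)) =ᵐ[ν] (f ⁻¹' A ∩ Ω : Set (En n)) := by
  filter_upwards [hlim] with x hx
  refine propext (and_congr_left fun hxΩ ↦ (hx hxΩ).mem_tildePreimage_iff ?_)
  simpa only [hΩ.nhdsWithin_eq hxΩ] using hf x hxΩ

end VariationMeasure

theorem tilde_preimage_bound_iff_preimage_bound_general {n m : ℕ} {Ω : Set (En n)}
    (Ω₂ : Set (En m)) (hΩ : IsOpen Ω) {f : En n → En m} {ν : Measure (En n)}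
    (hBV : MemBVloc Ω f ν) (hjump : NoJumpPart f ν) {S : Set (En n)}
    (hScarrier : ν.restrict Sᶜ ≪ volume)
    (hfS : ∀ z ∈ S, ∀ w : En m, ApproxLimAt f z w → f z = w) (K : ℝ) :
    (∀ A : Set (En m), A ⊆ Ω₂ → MeasurableSet A →
        ν (tildePreimage f A ∩ Ω) ≤ ENNReal.ofReal K * volume A)
      ↔ (∀ A : Set (En m), A ⊆ Ω₂ → MeasurableSet A →
        ν (f ⁻¹' A ∩ Ω) ≤ ENNReal.ofReal K * volume A) := by
  have hlim : ∀ᵐ x ∂ν, x ∈ Ω → ApproxLimAt f x (f x) :=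
    hjump.ae_approxLimAt_self hΩ hBV.1 hScarrier hfS
  have hmeasure (A : Set (En m)) : ν (tildePreimage f A ∩ Ω) = ν (f ⁻¹' A ∩ Ω) :=
    measure_congr (tildePreimage_inter_ae_eq_preimage_inter hΩ hBV.1 hlim A)
  simp only [hmeasure]

/-- **Lemma (Statement 7).** Let `f ∈ BV(Ω, ℝⁿ)` have no jump part and coincide with its
approximate limit at every point of a null carrier `S` of the Cantor part `|D^c f|`
where the approximate limit exists.  Then `|Df|(f̃⁻¹(A)) ≤ K·Lⁿ(A)` for all Borel
`A ⊆ Ω₂` if and only if `|Df|(f⁻¹(A)) ≤ K·Lⁿ(A)` for all Borel `A ⊆ Ω₂`. -/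
theorem tilde_preimage_bound_iff_preimage_bound {n : ℕ}
    (Ω Ω₂ : Set (En n)) (hΩ : IsOpen Ω) (hΩ₂ : IsOpen Ω₂)
    (f : En n → En n) (hmaps : MapsTo f Ω Ω₂)
    (ν : Measure (En n)) (hBV : MemBV Ω f ν) (hjump : NoJumpPart f ν)
    (S : Set (En n)) (hSmeas : MeasurableSet S) (hSnull : volume S = 0)
    (hScarrier : ν.restrict Sᶜ ≪ volume)
    (hfS : ∀ z ∈ S, ∀ w : En n, ApproxLimAt f z w → f z = w)
    (K : ℝ) :
    (∀ A : Set (En n), A ⊆ Ω₂ → MeasurableSet A →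
        ν (tildePreimage f A ∩ Ω) ≤ ENNReal.ofReal K * volume A)
      ↔ (∀ A : Set (En n), A ⊆ Ω₂ → MeasurableSet A →
        ν (f ⁻¹' A ∩ Ω) ≤ ENNReal.ofReal K * volume A) := by
  exact tilde_preimage_bound_iff_preimage_bound_general Ω₂ hΩ hBV.memBVloc hjump hScarrier hfS K
end
end

section
/- Assume that f : Ω₁ → Ω₂ is a homeomorphism of bounded variation between open subsets of ℝⁿ. Then the inequality ∫_{f⁻¹(A)} |D^a f| dLⁿ ≤ C₁·Lⁿ(A) for all Borel sets A ⊆ Ω₂ is equivalent to |D^a f(x)| ≤ C₁·|J_f(x)| for Lⁿ-a.e. x ∈ Ω₁. -/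
open MeasureTheory Metric Set Filter
open scoped ENNReal Topology NNReal

noncomputable section

/-- `L` is the approximate differential of `f` at `x`. -/
def HasApproxDerivAt {n : ℕ} (f : En n → En n) (L : En n →L[ℝ] En n) (x : En n) : Prop :=
  ∀ ε : ℝ, 0 < ε → Tendsto (fun r : ℝ =>
      volume {y ∈ Metric.ball x r | ε * ‖y - x‖ < ‖f y - f x - L (y - x)‖}
        / volume (Metric.ball x r))
    (nhdsWithin 0 (Set.Ioi 0)) (nhds 0)

/-!
Write `φ_{x,t}` for the rescaling of a bump `φ` to the scale `t` around `x`. The derivative of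
`∫ f φ_{x,t}` in `t` is minus the integral of `f` against the divergence of the field
`(z - x) φ_{x,t}(z) / t`, so it is an integral against `Df` and is bounded as soon as
`|Df|(B(x, s)) ≤ K sⁿ` for small `s`. Hence at a Lebesgue point `∫ f φ_{x,t}` is within `O(t)` of
`f x`, and comparing two such points at the scale of their distance shows that `f` is Lipschitz on
small sets of them. Since `|Df|` has finite density almost everywhere, `Ω₁` is up to a null set a
countable union of sets on which `f` is Lipschitz, and so, by Rademacher's theorem and Lebesgue
density, of sets on which `f` is differentiable with the approximate differential as derivative.

Over these sets the area formula gives `∫_{f⁻¹(A)} |J_f| = Lⁿ(A ∩ f(G))`, where `G` is their union.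
Integrating the pointwise bound over `f⁻¹(A)` yields the bound on measures; conversely, the latter
for the images `A = f(s ∩ G)` compares the integrals of `|D^a f|` and `C₁ |J_f|` over all `s ∩ G`.
-/

section Dilation

variable {n : ℕ} {E : Type*} [NormedAddCommGroup E] [NormedSpace ℝ E]

/-- The kernel `z ↦ t⁻ⁿ φ((z - x) / t)` obtained by rescaling the profile `φ` to the scale `t`
around `x`; for `0 < t` it has the same integral as `φ`. -/
def dilate (φ : En n → ℝ) (x : En n) (t : ℝ) (z : En n) : ℝ :=
  (t ^ n)⁻¹ * φ (t⁻¹ • (z - x))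

/-- The divergence of the vector field `ζ ↦ φ ζ • ζ`, which is minus the derivative of the dilations
of `φ` with respect to the scale, at scale `1`. -/
def radialDiv (φ : En n → ℝ) (ζ : En n) : ℝ :=
  n * φ ζ + fderiv ℝ φ ζ ζ

theorem sum_fderiv_coord_mul_eq_radialDiv {φ : En n → ℝ} {ζ : En n}
    (hφ : DifferentiableAt ℝ φ ζ) :
    ∑ i, fderiv ℝ (fun ξ : En n => ξ i * φ ξ) ζ (EuclideanSpace.single i 1) = radialDiv φ ζ := by
  have hproduct (i : Fin n) :
      fderiv ℝ (fun ξ : En n => ξ i * φ ξ) ζ (EuclideanSpace.single i 1)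
        = φ ζ + ζ i * fderiv ℝ φ ζ (EuclideanSpace.single i 1) := by
    have hcoord : HasFDerivAt (fun ξ : En n => ξ i) (EuclideanSpace.proj i : En n →L[ℝ] ℝ) ζ :=
      (EuclideanSpace.proj i : En n →L[ℝ] ℝ).hasFDerivAt
    rw [(hcoord.fun_mul hφ.hasFDerivAt).fderiv]
    simp [add_comm]
  have hsum : ∑ i, ζ i * fderiv ℝ φ ζ (EuclideanSpace.single i 1) = fderiv ℝ φ ζ ζ := by
    generalize fderiv ℝ φ ζ = L
    conv_rhs => rw [← (EuclideanSpace.basisFun (Fin n) ℝ).sum_repr ζ]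
    simp [map_sum]
  simp [hproduct, Finset.sum_add_distrib, hsum, radialDiv]

theorem continuous_radialDiv {φ : En n → ℝ} (hφ : ContDiff ℝ 1 φ) :
    Continuous (radialDiv φ) :=
  (continuous_const.mul hφ.continuous).add
    ((hφ.continuous_fderiv one_ne_zero).clm_apply continuous_id)

theorem hasCompactSupport_radialDiv {φ : En n → ℝ} (hφ : HasCompactSupport φ) :
    HasCompactSupport (radialDiv φ) := by
  refine HasCompactSupport.intro hφ fun ζ hζ => ?_
  simp [radialDiv, image_eq_zero_of_notMem_tsupport hζ, fderiv_of_notMem_tsupport (𝕜 := ℝ) hζ]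

theorem support_dilate_subset {φ : En n → ℝ} {R t : ℝ} (hφ : Function.support φ ⊆ ball 0 R)
    (x : En n) (ht : 0 < t) : Function.support (dilate φ x t) ⊆ ball x (R * t) := by
  intro z hz
  have hmem : ‖t⁻¹ • (z - x)‖ < R := mem_ball_zero_iff.1 (hφ (right_ne_zero_of_mul hz))
  rwa [norm_smul, norm_inv, Real.norm_of_nonneg ht.le, inv_mul_lt_iff₀ ht, mul_comm,
    ← dist_eq_norm] at hmem

theorem continuous_dilate {φ : En n → ℝ} (hφ : Continuous φ) (x : En n) (t : ℝ) :
    Continuous (dilate φ x t) := by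
  unfold dilate
  fun_prop

theorem contDiff_dilate {φ : En n → ℝ} {k : WithTop ℕ∞} (hφ : ContDiff ℝ k φ) (x : En n) (t : ℝ) :
    ContDiff ℝ k (dilate φ x t) := by
  unfold dilate
  fun_prop

theorem smoothTest_dilate {φ : En n → ℝ} {Ω : Set (En n)} {x : En n} {R t : ℝ}
    (hφ : ContDiff ℝ (⊤ : ℕ∞) φ) (hsupp : Function.support φ ⊆ ball 0 R) (ht : 0 < t)
    (hΩ : closedBall x (R * t) ⊆ Ω) : SmoothTest Ω (dilate φ x t) := by
  have htsupp : tsupport (dilate φ x t) ⊆ closedBall x (R * t) :=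
    closure_minimal ((support_dilate_subset hsupp x ht).trans ball_subset_closedBall)
      isClosed_closedBall
  exact ⟨contDiff_dilate hφ x t,
    (isCompact_closedBall x (R * t)).of_isClosed_subset (isClosed_tsupport _) htsupp,
    htsupp.trans hΩ⟩

theorem norm_dilate_le {φ : En n → ℝ} {M t : ℝ} (hM : ∀ ζ, ‖φ ζ‖ ≤ M) (ht : 0 ≤ t) (x z : En n) :
    ‖dilate φ x t z‖ ≤ (t ^ n)⁻¹ * M := by
  rw [dilate, norm_mul, norm_inv, Real.norm_of_nonneg (pow_nonneg ht n)]
  gcongr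
  exact hM _

theorem integral_dilate (φ : En n → ℝ) (x : En n) {t : ℝ} (ht : 0 < t) :
    ∫ z, dilate φ x t z = ∫ ζ, φ ζ := by
  simp only [dilate]
  rw [integral_const_mul, integral_sub_right_eq_self (fun z => φ (t⁻¹ • z)) x,
    Measure.integral_comp_inv_smul_of_nonneg _ _ ht.le, finrank_euclideanSpace_fin, smul_eq_mul,
    inv_mul_cancel_left₀ (pow_ne_zero n ht.ne')]

theorem fderiv_dilate_apply {φ : En n → ℝ} (hφ : Differentiable ℝ φ) (x : En n) (t : ℝ)
    (z v : En n) :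
    fderiv ℝ (dilate φ x t) z v = t⁻¹ * dilate (fun ζ => fderiv ℝ φ ζ v) x t z := by
  have hscale : HasFDerivAt (fun z : En n => t⁻¹ • (z - x))
      (t⁻¹ • ContinuousLinearMap.id ℝ (En n)) z :=
    ((hasFDerivAt_id z).sub_const x).fun_const_smul t⁻¹
  have hdilate : HasFDerivAt (dilate φ x t) _ z :=
    ((hφ _).hasFDerivAt.comp z hscale).const_mul (t ^ n)⁻¹
  simp only [hdilate.fderiv, dilate, smul_apply, ContinuousLinearMap.comp_apply,
    ContinuousLinearMap.id_apply, map_smul, smul_eq_mul]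
  ring

theorem hasDerivAt_dilate {φ : En n → ℝ} (hφ : Differentiable ℝ φ) (x z : En n) {t : ℝ}
    (ht : t ≠ 0) :
    HasDerivAt (fun s => dilate φ x s z) (-(t⁻¹ * dilate (radialDiv φ) x t z)) t := by
  have hscale : HasDerivAt (fun s : ℝ => s⁻¹ • (z - x)) (-(t ^ 2)⁻¹ • (z - x)) t :=
    (hasDerivAt_inv ht).smul_const (z - x)
  have hfactor : HasDerivAt (fun s : ℝ => (s ^ n)⁻¹) (-(n * t ^ (n - 1)) / (t ^ n) ^ 2) t :=
    (hasDerivAt_pow n t).inv (pow_ne_zero _ ht)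
  refine (hfactor.mul ((hφ _).hasFDerivAt.comp_hasDerivAt t hscale)).congr_deriv ?_
  simp only [dilate, radialDiv, Function.comp_apply, map_smul, smul_eq_mul]
  rcases n with _ | m
  · simp only [CharP.cast_eq_zero, zero_tsub, pow_zero, mul_one, neg_zero, one_pow, div_one,
      zero_mul, inv_one, map_sub, neg_mul, mul_neg, one_mul, zero_add, neg_inj]
    field_simp
  · simp only [Nat.add_sub_cancel]
    field_simp
    push_cast
    ring

theorem norm_integral_dilate_smul_le {φ : En n → ℝ} {g : En n → E} {μ : Measure (En n)}
    {M R t : ℝ} {x : En n} (hM : ∀ ζ, ‖φ ζ‖ ≤ M) (hsupp : Function.support φ ⊆ ball 0 R)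
    (ht : 0 < t) (hg : IntegrableOn g (ball x (R * t)) μ) :
    ‖∫ z, dilate φ x t z • g z ∂μ‖ ≤ (t ^ n)⁻¹ * M * ∫ z in ball x (R * t), ‖g z‖ ∂μ := by
  have hball : ∫ z in ball x (R * t), dilate φ x t z • g z ∂μ = ∫ z, dilate φ x t z • g z ∂μ :=
    setIntegral_eq_integral_of_forall_compl_eq_zero fun z hz => by
      rw [Function.notMem_support.1 fun h => hz (support_dilate_subset hsupp x ht h), zero_smul]
  rw [← hball, ← integral_const_mul]
  refine norm_integral_le_of_norm_le (hg.norm.const_mul _) (Eventually.of_forall fun z => ?_)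
  rw [norm_smul]
  gcongr
  exact norm_dilate_le hM ht.le x z

theorem integrable_dilate_smul {φ : En n → ℝ} {g : En n → E} {μ : Measure (En n)} {t : ℝ}
    (hφ : Continuous φ) (hsupp : HasCompactSupport φ) (ht : 0 ≤ t) (x : En n)
    (hg : Integrable g μ) : Integrable (fun z => dilate φ x t z • g z) μ := by
  obtain ⟨M, hM⟩ := hφ.bounded_above_of_compact_support hsupp
  exact hg.bdd_smul _ (continuous_dilate hφ x t).aestronglyMeasurable
    (Eventually.of_forall (norm_dilate_le hM ht x))

theorem hasDerivAt_integral_dilate_smul {φ : En n → ℝ} {g : En n → E} {μ : Measure (En n)} {t : ℝ}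
    (hφ : ContDiff ℝ 1 φ) (hsupp : HasCompactSupport φ) (hg : Integrable g μ) (x : En n)
    (ht : 0 < t) :
    HasDerivAt (fun s => ∫ z, dilate φ x s z • g z ∂μ)
      (∫ z, -(t⁻¹ * dilate (radialDiv φ) x t z) • g z ∂μ) t := by
  obtain ⟨M, hM⟩ := (continuous_radialDiv hφ).bounded_above_of_compact_support
    (hasCompactSupport_radialDiv hsupp)
  have hM₀ : 0 ≤ M := (norm_nonneg _).trans (hM 0)
  have hcont (s : ℝ) : Continuous (dilate (radialDiv φ) x s) :=
    continuous_dilate (continuous_radialDiv hφ) x s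
  have hbound {s : ℝ} (hs : t / 2 < s) (z : En n) :
      ‖-(s⁻¹ * dilate (radialDiv φ) x s z) • g z‖
        ≤ (t / 2)⁻¹ * (((t / 2) ^ n)⁻¹ * M) * ‖g z‖ := by
    have hs₀ : 0 < s := (half_pos ht).trans hs
    rw [norm_smul, norm_neg, norm_mul, norm_inv, Real.norm_of_nonneg hs₀.le]
    gcongr
    exact (norm_dilate_le hM hs₀.le x z).trans (by gcongr)
  exact (hasDerivAt_integral_of_dominated_loc_of_deriv_le
    (F := fun s z => dilate φ x s z • g z) (Ioi_mem_nhds (half_lt_self ht))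
    (Eventually.of_forall fun s =>
      (continuous_dilate hφ.continuous x s).aestronglyMeasurable.smul hg.aestronglyMeasurable)
    (integrable_dilate_smul hφ.continuous hsupp ht.le x hg)
    ((continuous_const.mul (hcont t)).neg.aestronglyMeasurable.smul hg.aestronglyMeasurable)
    (Eventually.of_forall fun z s hs => hbound hs z)
    (hg.norm.const_mul _)
    (Eventually.of_forall fun z s hs =>
      (hasDerivAt_dilate (hφ.differentiable one_ne_zero) x z
        ((half_pos ht).trans hs).ne').smul_const (g z))).2

end Dilation

section DerivativeBound

variable {n m : ℕ} {Ω : Set (En n)} {f : En n → En m} {φ : En n → ℝ} {x : En n}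

theorem abs_apply_le_frobNorm (M : Fin m → Fin n → ℝ) (j : Fin m) (i : Fin n) :
    |M j i| ≤ frobNorm M := by
  refine Real.abs_le_sqrt ?_
  calc M j i ^ 2 ≤ ∑ i, M j i ^ 2 :=
        Finset.single_le_sum (f := fun i => M j i ^ 2) (fun _ _ => sq_nonneg _) (Finset.mem_univ i)
    _ ≤ ∑ j, ∑ i, M j i ^ 2 :=
        Finset.single_le_sum (f := fun j => ∑ i, M j i ^ 2)
          (fun _ _ => Finset.sum_nonneg fun _ _ => sq_nonneg _) (Finset.mem_univ j)

theorem norm_le_sum_abs_apply (v : En m) : ‖v‖ ≤ ∑ j, |v j| := by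
  rw [EuclideanSpace.norm_eq, Real.sqrt_le_left (Finset.sum_nonneg fun _ _ => abs_nonneg _)]
  exact Finset.sum_sq_le_sq_sum_of_nonneg fun _ _ => abs_nonneg _

theorem volume_real_ball_eq (x : En n) {r : ℝ} (hr : 0 < r) :
    (volume (ball x r)).toReal = r ^ n * (volume (ball (0 : En n) 1)).toReal := by
  rw [Measure.addHaar_ball_of_pos _ _ hr, finrank_euclideanSpace_fin, ENNReal.toReal_mul,
    ENNReal.toReal_ofReal (pow_nonneg hr.le n)]

theorem hasCompactSupport_of_support_subset_ball {R : ℝ} (hsupp : Function.support φ ⊆ ball x R) :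
    HasCompactSupport φ :=
  .of_support_subset_isCompact (isCompact_closedBall x R) (hsupp.trans ball_subset_closedBall)

theorem setIntegral_dilate_smul_const {R t : ℝ} (v : En m) (hsupp : Function.support φ ⊆ ball 0 R)
    (ht : 0 < t) (hΩ : ball x (R * t) ⊆ Ω) :
    ∫ z in Ω, dilate φ x t z • v = (∫ ζ, φ ζ) • v := by
  rw [integral_smul_const, ← integral_dilate φ x ht,
    setIntegral_eq_integral_of_forall_compl_eq_zero fun z hz =>
      Function.notMem_support.1 fun h => hz (hΩ (support_dilate_subset hsupp x ht h))]

theorem ApproxLimAt.tendsto_integral_dilate_smul {v : En m} {R : ℝ} (hv : ApproxLimAt f x v)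
    (hΩ : Ω ∈ 𝓝 x) (hf : IntegrableOn f Ω) (hφ : Continuous φ) (hR : 0 < R)
    (hsupp : Function.support φ ⊆ ball 0 R) :
    Tendsto (fun t => ∫ z in Ω, dilate φ x t z • f z) (𝓝[>] 0) (𝓝 ((∫ ζ, φ ζ) • v)) := by
  obtain ⟨M, hM⟩ :=
    hφ.bounded_above_of_compact_support (hasCompactSupport_of_support_subset_ball hsupp)
  have hscale : Tendsto (fun t => R * t) (𝓝[>] 0) (𝓝[>] 0) :=
    tendsto_nhdsWithin_iff.2 ⟨(Continuous.tendsto' (by fun_prop) 0 0 (mul_zero R)).mono_left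
      nhdsWithin_le_nhds, eventually_mem_nhdsWithin.mono fun t ht => mul_pos hR ht⟩
  have haverage := (hv.comp hscale).const_mul (M * R ^ n * (volume (ball (0 : En n) 1)).toReal)
  rw [mul_zero] at haverage
  refine tendsto_iff_norm_sub_tendsto_zero.2
    (squeeze_zero' (Eventually.of_forall fun _ => norm_nonneg _) ?_ haverage)
  obtain ⟨ρ, hρ, hρΩ⟩ := Metric.mem_nhds_iff.1 hΩ
  filter_upwards [eventually_mem_nhdsWithin,
    hscale.eventually (mem_nhdsWithin_of_mem_nhds (Iio_mem_nhds hρ))] with t (ht : 0 < t) htρ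
  have hball : ball x (R * t) ⊆ Ω := (ball_subset_ball (le_of_lt htρ)).trans hρΩ
  have hdilate : Integrable (dilate φ x t) :=
    (continuous_dilate hφ x t).integrable_of_hasCompactSupport
      (hasCompactSupport_of_support_subset_ball (support_dilate_subset hsupp x ht))
  have hdiff : IntegrableOn (fun z => f z - v) (ball x (R * t)) (volume.restrict Ω) :=
    hf.integrableOn.sub
      (integrableOn_const ((Measure.restrict_apply_le Ω _).trans_lt measure_ball_lt_top).ne)
  calc ‖(∫ z in Ω, dilate φ x t z • f z) - (∫ ζ, φ ζ) • v‖
      = ‖∫ z in Ω, dilate φ x t z • (f z - v)‖ := by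
        rw [← setIntegral_dilate_smul_const v hsupp ht hball, ← integral_sub
          (integrable_dilate_smul hφ (hasCompactSupport_of_support_subset_ball hsupp) ht.le x hf)
          (hdilate.integrableOn.smul_const v)]
        simp only [smul_sub]
    _ ≤ (t ^ n)⁻¹ * M * ∫ z in ball x (R * t), ‖f z - v‖ := by
        simpa only [Measure.restrict_restrict measurableSet_ball, inter_eq_left.2 hball] using
          norm_integral_dilate_smul_le hM hsupp ht hdiff
    _ = _ := by
        rw [Function.comp_apply, volume_real_ball_eq x (mul_pos hR ht)]
        have := ENNReal.toReal_pos (measure_ball_pos volume (0 : En n) one_pos).ne'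
          measure_ball_lt_top.ne
        field_simp
        rw [mul_pow]
        ring

namespace IsVariationMeasure

variable {σ : En n → Fin m → Fin n → ℝ} {ν : Measure (En n)} {t M K R : ℝ}

theorem ae_abs_apply_le_one (hσν : IsVariationMeasure Ω f σ ν) (j : Fin m) (i : Fin n) :
    ∀ᵐ z ∂ν, |σ z j i| ≤ 1 :=
  hσν.2.1.mono fun z hz => (abs_apply_le_frobNorm (σ z) j i).trans_eq hz

theorem measurable_apply (hσν : IsVariationMeasure Ω f σ ν) (j : Fin m) (i : Fin n) :
    Measurable fun z => σ z j i :=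
  (measurable_pi_apply i).comp ((measurable_pi_apply j).comp hσν.1)

theorem integral_dilate_mul (hσν : IsVariationMeasure Ω f σ ν) (hφ : ContDiff ℝ (⊤ : ℕ∞) φ)
    (hsupp : Function.support φ ⊆ ball 0 R) (ht : 0 < t) (hΩ : closedBall x (R * t) ⊆ Ω)
    (j : Fin m) (i : Fin n) :
    ∫ z, dilate φ x t z * σ z j i ∂ν
      = -t⁻¹ * ∫ z in Ω,
          dilate (fun ζ => fderiv ℝ φ ζ (EuclideanSpace.single i 1)) x t z * f z j := by
  rw [← neg_inj, ← hσν.2.2.2 _ (smoothTest_dilate hφ hsupp ht hΩ) j i, neg_mul, neg_neg,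
    ← integral_const_mul]
  refine integral_congr_ae (Eventually.of_forall fun z => ?_)
  simp only [fderiv_dilate_apply (hφ.differentiable (by simp))]
  ring

theorem integral_radialDiv_smul_apply (hσν : IsVariationMeasure Ω f σ ν) (hf : IntegrableOn f Ω)
    (hφ : ContDiff ℝ (⊤ : ℕ∞) φ) (hsupp : Function.support φ ⊆ ball 0 R) (ht : 0 < t)
    (hΩ : closedBall x (R * t) ⊆ Ω) (j : Fin m) :
    (∫ z in Ω, -(t⁻¹ * dilate (radialDiv φ) x t z) • f z) j
      = ∑ i, ∫ z, dilate (fun ζ => ζ i * φ ζ) x t z * σ z j i ∂ν := by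
  have hcoord (j : Fin m) : Integrable (fun z => f z j) (volume.restrict Ω) :=
    (EuclideanSpace.proj j : En m →L[ℝ] ℝ).integrable_comp hf
  have hradial (j : Fin m) :
      Integrable (fun z => dilate (radialDiv φ) x t z * f z j) (volume.restrict Ω) :=
    integrable_dilate_smul (continuous_radialDiv (hφ.of_le (by simp)))
      (hasCompactSupport_radialDiv (hasCompactSupport_of_support_subset_ball hsupp)) ht.le x
      (hcoord j)
  have hsmooth (i : Fin n) : ContDiff ℝ (⊤ : ℕ∞) fun ζ : En n => ζ i * φ ζ := by fun_prop
  have hsupp' (i : Fin n) : Function.support (fun ζ : En n => ζ i * φ ζ) ⊆ ball 0 R :=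
    (Function.support_mul_subset_right _ _).trans hsupp
  have hpartial (i : Fin n) : Integrable (fun z => dilate
      (fun ζ => fderiv ℝ (fun ξ : En n => ξ i * φ ξ) ζ (EuclideanSpace.single i 1)) x t z * f z j)
      (volume.restrict Ω) :=
    integrable_dilate_smul (((hsmooth i).continuous_fderiv (by simp)).clm_apply continuous_const)
      ((hasCompactSupport_of_support_subset_ball (hsupp' i)).fderiv_apply ℝ _) ht.le x (hcoord j)
  calc (∫ z in Ω, -(t⁻¹ * dilate (radialDiv φ) x t z) • f z) j
      = -t⁻¹ * ∫ z in Ω, dilate (radialDiv φ) x t z * f z j := by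
        simp only [← integral_const_mul, ← neg_mul, mul_smul]
        exact eval_integral_piLp (fun j => (hradial j).const_mul (-t⁻¹)) j
    _ = -t⁻¹ * ∑ i, ∫ z in Ω, dilate (fun ζ => fderiv ℝ (fun ξ : En n => ξ i * φ ξ) ζ
          (EuclideanSpace.single i 1)) x t z * f z j := by
        rw [← integral_finsetSum _ fun i _ => hpartial i]
        simp only [dilate, ← Finset.mul_sum, ← Finset.sum_mul,
          sum_fderiv_coord_mul_eq_radialDiv (hφ.differentiable (by simp) _)]
    _ = ∑ i, ∫ z, dilate (fun ζ => ζ i * φ ζ) x t z * σ z j i ∂ν := by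
        rw [Finset.mul_sum]
        exact Finset.sum_congr rfl fun i _ =>
          (hσν.integral_dilate_mul (hsmooth i) (hsupp' i) ht hΩ j i).symm

theorem norm_integral_dilate_mul_le (hσν : IsVariationMeasure Ω f σ ν) (hM : ∀ ζ, ‖φ ζ‖ ≤ M)
    (hsupp : Function.support φ ⊆ ball 0 R) (hR : 0 < R) (ht : 0 < t) (hK : 0 ≤ K)
    (hν : ν (ball x (R * t)) ≤ ENNReal.ofReal (K * (R * t) ^ n)) (j : Fin m) (i : Fin n) :
    ‖∫ z, dilate φ x t z * σ z j i ∂ν‖ ≤ M * K * R ^ n := by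
  have hM₀ : 0 ≤ M := (norm_nonneg _).trans (hM 0)
  have hfin : ν (ball x (R * t)) < ⊤ := hν.trans_lt ENNReal.ofReal_lt_top
  have hbound : ∀ᵐ z ∂ν.restrict (ball x (R * t)), ‖σ z j i‖ ≤ 1 :=
    ae_restrict_of_ae (hσν.ae_abs_apply_le_one j i)
  have hσ : IntegrableOn (fun z => σ z j i) (ball x (R * t)) ν :=
    .of_bound hfin (hσν.measurable_apply j i).aestronglyMeasurable 1 hbound
  have hmass : ∫ z in ball x (R * t), ‖σ z j i‖ ∂ν ≤ K * (R * t) ^ n := by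
    calc ∫ z in ball x (R * t), ‖σ z j i‖ ∂ν ≤ ∫ _ in ball x (R * t), (1 : ℝ) ∂ν :=
          integral_mono_ae hσ.norm (integrableOn_const hfin.ne) hbound
      _ = ν.real (ball x (R * t)) := by simp
      _ ≤ K * (R * t) ^ n := ENNReal.toReal_le_of_le_ofReal (by positivity) hν
  calc ‖∫ z, dilate φ x t z * σ z j i ∂ν‖
      ≤ (t ^ n)⁻¹ * M * ∫ z in ball x (R * t), ‖σ z j i‖ ∂ν :=
        norm_integral_dilate_smul_le hM hsupp ht hσ
    _ ≤ (t ^ n)⁻¹ * M * (K * (R * t) ^ n) := by gcongr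
    _ = M * K * R ^ n := by
        rw [mul_pow]
        field_simp

theorem norm_integral_radialDiv_smul_le (hσν : IsVariationMeasure Ω f σ ν)
    (hf : IntegrableOn f Ω) (hφ : ContDiff ℝ (⊤ : ℕ∞) φ) (hM : ∀ ζ, ‖φ ζ‖ ≤ M)
    (hsupp : Function.support φ ⊆ ball 0 R) (hR : 0 < R) (ht : 0 < t) (hK : 0 ≤ K)
    (hΩ : closedBall x (R * t) ⊆ Ω)
    (hν : ν (ball x (R * t)) ≤ ENNReal.ofReal (K * (R * t) ^ n)) :
    ‖∫ z in Ω, -(t⁻¹ * dilate (radialDiv φ) x t z) • f z‖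
      ≤ m * (n * (R * M * K * R ^ n)) := by
  have hmoment (i : Fin n) (ζ : En n) : ‖ζ i * φ ζ‖ ≤ R * M := by
    by_cases hζ : ζ ∈ Function.support φ
    · rw [norm_mul]
      gcongr
      exacts [(PiLp.norm_apply_le ζ i).trans (mem_ball_zero_iff.1 (hsupp hζ)).le, hM ζ]
    · rw [Function.notMem_support.1 hζ, mul_zero, norm_zero]
      exact mul_nonneg hR.le ((norm_nonneg _).trans (hM 0))
  have hsupp' (i : Fin n) : Function.support (fun ζ : En n => ζ i * φ ζ) ⊆ ball 0 R :=
    (Function.support_mul_subset_right _ _).trans hsupp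
  refine (norm_le_sum_abs_apply _).trans ?_
  simp only [hσν.integral_radialDiv_smul_apply hf hφ hsupp ht hΩ]
  calc ∑ j, |∑ i, ∫ z, dilate (fun ζ => ζ i * φ ζ) x t z * σ z j i ∂ν|
      ≤ ∑ _j : Fin m, ∑ _i : Fin n, R * M * K * R ^ n :=
        Finset.sum_le_sum fun j _ => norm_sum_le_of_le _ fun i _ =>
          hσν.norm_integral_dilate_mul_le (hmoment i) (hsupp' i) hR ht hK hν j i
    _ = m * (n * (R * M * K * R ^ n)) := by simp

theorem norm_integral_dilate_smul_sub_le (hσν : IsVariationMeasure Ω f σ ν)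
    (hf : IntegrableOn f Ω) (hφ : ContDiff ℝ (⊤ : ℕ∞) φ) (hM : ∀ ζ, ‖φ ζ‖ ≤ M)
    (hsupp : Function.support φ ⊆ ball 0 R) (hR : 0 < R) (hK : 0 ≤ K)
    {r δ : ℝ} (hr : 0 < r) (hrδ : R * r < δ) (hΩ : ball x δ ⊆ Ω)
    (hν : ∀ s, 0 < s → s < δ → ν (ball x s) ≤ ENNReal.ofReal (K * s ^ n))
    {v : En m} (hv : ApproxLimAt f x v) :
    ‖(∫ z in Ω, dilate φ x r z • f z) - (∫ ζ, φ ζ) • v‖ ≤ m * (n * (R * M * K * R ^ n)) * r := by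
  have hΩx : Ω ∈ 𝓝 x := mem_of_superset (ball_mem_nhds x ((mul_pos hR hr).trans hrδ)) hΩ
  have hsmall := hv.tendsto_integral_dilate_smul hΩx hf hφ.continuous hR hsupp
  refine le_of_tendsto (hsmall.const_sub _).norm ?_
  filter_upwards [Ioo_mem_nhdsGT hr] with a ⟨ha, har⟩
  have hmean := Convex.norm_image_sub_le_of_norm_hasDerivWithin_le (𝕜 := ℝ)
    (f := fun s => ∫ z in Ω, dilate φ x s z • f z) (s := Icc a r) (x := a) (y := r)
    (C := m * (n * (R * M * K * R ^ n)))
    (fun t ht => (hasDerivAt_integral_dilate_smul (hφ.of_le (by simp))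
      (hasCompactSupport_of_support_subset_ball hsupp) hf x (ha.trans_le ht.1)).hasDerivWithinAt)
    (fun t ht => by
      have ht₀ : 0 < t := ha.trans_le ht.1
      have htδ : R * t < δ := (mul_le_mul_of_nonneg_left ht.2 hR.le).trans_lt hrδ
      exact hσν.norm_integral_radialDiv_smul_le hf hφ hM hsupp hR ht₀ hK
        ((closedBall_subset_ball htδ).trans hΩ) (hν _ (mul_pos hR ht₀) htδ))
    (convex_Icc a r) (left_mem_Icc.2 har.le) (right_mem_Icc.2 har.le)
  refine hmean.trans ?_
  rw [Real.norm_of_nonneg (sub_nonneg.2 har.le)]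
  have hM₀ : 0 ≤ M := (norm_nonneg _).trans (hM 0)
  gcongr
  linarith

end IsVariationMeasure

end DerivativeBound

section ControlledPoints

variable {n m : ℕ} {Ω : Set (En n)} {f : En n → En m} {ν : Measure (En n)}

theorem ball_ae_eq_closedBall_s8 (x : En n) {r : ℝ} (hr : 0 < r) :
    ball x r =ᵐ[volume] closedBall x r :=
  ae_eq_of_subset_of_measure_ge ball_subset_closedBall
    (by rw [Measure.addHaar_closedBall _ _ hr.le, Measure.addHaar_ball_of_pos _ _ hr])
    measurableSet_ball.nullMeasurableSet measure_closedBall_lt_top.ne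

theorem ae_approxLimAt (hΩ : IsOpen Ω) (hf : IntegrableOn f Ω) :
    ∀ᵐ x ∂volume, x ∈ Ω → ApproxLimAt f x (f x) := by
  have hint : Integrable (Ω.indicator f) volume := hf.integrable_indicator hΩ.measurableSet
  filter_upwards [IsUnifLocDoublingMeasure.ae_tendsto_average_norm_sub volume
    hint.locallyIntegrable 1] with x hx hxΩ
  have haverage := hx (l := 𝓝[>] 0) (fun _ => x) id tendsto_id
    (eventually_mem_nhdsWithin.mono fun r (hr : 0 < r) =>
      mem_closedBall_self (by simpa using hr.le))
  obtain ⟨ρ, hρ, hρΩ⟩ := Metric.isOpen_iff.1 hΩ x hxΩ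
  refine haverage.congr' ?_
  filter_upwards [Ioo_mem_nhdsGT hρ] with r ⟨hr, hrρ⟩
  have hball := ball_ae_eq_closedBall_s8 x hr
  rw [id, ← setAverage_congr hball, setAverage_eq, smul_eq_mul, inv_mul_eq_div, Measure.real]
  congr 1
  refine setIntegral_congr_fun measurableSet_ball fun y hy => ?_
  simp only [indicator_of_mem hxΩ, indicator_of_mem (hρΩ (ball_subset_ball hrρ.le hy))]

theorem ae_exists_eventually_measure_ball_le (ν : Measure (En n)) [IsLocallyFiniteMeasure ν] :
    ∀ᵐ x ∂volume, ∃ K : ℝ, ∀ᶠ s in 𝓝[>] 0, ν (ball x s) ≤ ENNReal.ofReal (K * s ^ n) := by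
  filter_upwards [Besicovitch.ae_tendsto_rnDeriv ν (volume : Measure (En n)),
    Measure.rnDeriv_lt_top ν (volume : Measure (En n))] with x hx hfin
  obtain ⟨D, hD, -⟩ := ENNReal.lt_iff_exists_nnreal_btwn.1 hfin
  refine ⟨D * (volume (ball (0 : En n) 1)).toReal, ?_⟩
  filter_upwards [hx.eventually (gt_mem_nhds hD), eventually_mem_nhdsWithin] with s hs (hs₀ : 0 < s)
  calc ν (ball x s) ≤ ν (closedBall x s) := measure_mono ball_subset_closedBall
    _ ≤ D * volume (closedBall x s) :=
        (ENNReal.div_le_iff (measure_closedBall_pos volume x hs₀).ne'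
          measure_closedBall_lt_top.ne).1 hs.le
    _ = D * volume (ball x s) := by rw [measure_congr (ball_ae_eq_closedBall_s8 x hs₀)]
    _ = ENNReal.ofReal (D * (volume (ball (0 : En n) 1)).toReal * s ^ n) := by
        rw [mul_assoc, mul_comm _ (s ^ n), ← volume_real_ball_eq x hs₀,
          ENNReal.ofReal_mul D.coe_nonneg, ENNReal.ofReal_coe_nnreal,
          ENNReal.ofReal_toReal measure_ball_lt_top.ne]

/-- The Lebesgue points `x` of `f` whose `δ`-ball lies in `Ω` and around which `ν` is bounded by
`K sⁿ` on the balls of radius `s < δ`. On small parts of such a set a map with variation measure `ν`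
is Lipschitz. -/
def controlledPoints (Ω : Set (En n)) (f : En n → En m) (ν : Measure (En n)) (K δ : ℝ) :
    Set (En n) :=
  {x | ApproxLimAt f x (f x) ∧ ball x δ ⊆ Ω ∧
    ∀ s, 0 < s → s < δ → ν (ball x s) ≤ ENNReal.ofReal (K * s ^ n)}

theorem ae_exists_mem_controlledPoints (hΩ : IsOpen Ω) (hf : IntegrableOn f Ω)
    (ν : Measure (En n)) [IsLocallyFiniteMeasure ν] :
    ∀ᵐ x ∂volume, x ∈ Ω → ∃ p : ℕ, x ∈ controlledPoints Ω f ν p (1 / (p + 1)) := by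
  filter_upwards [ae_approxLimAt hΩ hf, ae_exists_eventually_measure_ball_le ν]
    with x hlim ⟨K, hK⟩ hx
  obtain ⟨δ, hδ, hδK⟩ := mem_nhdsGT_iff_exists_Ioo_subset.1 hK
  obtain ⟨ρ, hρ, hρΩ⟩ := Metric.isOpen_iff.1 hΩ x hx
  obtain ⟨p, hp, hKp⟩ := ((tendsto_one_div_add_atTop_nhds_zero_nat.eventually_lt_const
    (lt_min hδ hρ)).and (tendsto_natCast_atTop_atTop.eventually_ge_atTop K)).exists
  refine ⟨p, hlim hx, (ball_subset_ball (hp.le.trans (min_le_right _ _))).trans hρΩ,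
    fun s hs hsp => ?_⟩
  refine (hδK ⟨hs, hsp.trans (hp.trans_le (min_le_left _ _))⟩).trans ?_
  gcongr

theorem dilate_translate (φ : En n → ℝ) (x y : En n) (t : ℝ) :
    dilate (fun ζ => φ (ζ + t⁻¹ • (y - x))) y t = dilate φ x t := by
  ext z
  rw [dilate, dilate, ← smul_add, sub_add_sub_cancel]

theorem IsVariationMeasure.dist_le_of_mem_controlledPoints {σ : En n → Fin m → Fin n → ℝ}
    {φ : En n → ℝ} {M K δ : ℝ} {x y : En n}
    (hσν : IsVariationMeasure Ω f σ ν) (hf : IntegrableOn f Ω) (hφ : ContDiff ℝ (⊤ : ℕ∞) φ)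
    (hM : ∀ ζ, ‖φ ζ‖ ≤ M) (hsupp : Function.support φ ⊆ ball 0 1) (hφ₁ : ∫ ζ, φ ζ = 1) (hK : 0 ≤ K)
    (hx : x ∈ controlledPoints Ω f ν K δ) (hy : y ∈ controlledPoints Ω f ν K δ)
    (hxy : 2 * dist x y < δ) :
    dist (f x) (f y) ≤ 2 * (m * (n * (2 * M * K * 2 ^ n))) * dist x y := by
  rcases eq_or_ne x y with rfl | hne
  · simp
  set r := dist x y
  have hr : 0 < r := dist_pos.2 hne
  -- Translating the profile turns the kernel centred at `y` into the one centred at `x`.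
  set e : En n := r⁻¹ • (y - x) with he_def
  have he : ‖e‖ = 1 := by
    rw [he_def, norm_smul, norm_inv, Real.norm_of_nonneg hr.le, ← dist_eq_norm, dist_comm y x,
      inv_mul_cancel₀ hr.ne']
  have htranslate_supp : Function.support (fun ζ => φ (ζ + e)) ⊆ ball 0 2 := fun ζ hζ => by
    have hζe : ‖ζ + e‖ < 1 := mem_ball_zero_iff.1 (hsupp hζ)
    have := norm_sub_le (ζ + e) e
    rw [add_sub_cancel_right] at this
    exact mem_ball_zero_iff.2 (by linarith)
  have hatx := hσν.norm_integral_dilate_smul_sub_le hf hφ hM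
    (hsupp.trans (ball_subset_ball one_le_two)) two_pos hK hr hxy hx.2.1 hx.2.2 hx.1
  have haty := hσν.norm_integral_dilate_smul_sub_le hf (φ := fun ζ => φ (ζ + e))
    (hφ.comp (contDiff_id.add contDiff_const)) (fun ζ => hM (ζ + e)) htranslate_supp two_pos hK hr
    hxy hy.2.1 hy.2.2 hy.1
  rw [hφ₁, one_smul] at hatx
  rw [dilate_translate, integral_add_right_eq_self φ e, hφ₁, one_smul] at haty
  calc dist (f x) (f y)
      ≤ dist (∫ z in Ω, dilate φ x r z • f z) (f x) + dist (∫ z in Ω, dilate φ x r z • f z) (f y) :=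
        dist_triangle_left _ _ _
    _ ≤ 2 * (m * (n * (2 * M * K * 2 ^ n))) * r := by
        rw [dist_eq_norm, dist_eq_norm]
        linarith

theorem IsVariationMeasure.exists_lipschitzOnWith {σ : En n → Fin m → Fin n → ℝ} {K δ : ℝ}
    {S : Set (En n)} (hσν : IsVariationMeasure Ω f σ ν) (hf : IntegrableOn f Ω) (hK : 0 ≤ K)
    (hS : S ⊆ controlledPoints Ω f ν K δ) (hsmall : ∀ x ∈ S, ∀ y ∈ S, 2 * dist x y < δ) :
    ∃ C, LipschitzOnWith C f S := by
  let b : ContDiffBump (0 : En n) := ⟨1 / 2, 1, by norm_num, by norm_num⟩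
  obtain ⟨M, hM⟩ := (b.continuous_normed (μ := volume)).bounded_above_of_compact_support
    b.hasCompactSupport_normed
  exact ⟨_, LipschitzOnWith.of_dist_le' fun x hx y hy =>
    hσν.dist_le_of_mem_controlledPoints hf b.contDiff_normed hM b.support_normed_eq.subset
      b.integral_normed hK (hS hx) (hS hy) (hsmall x hx y hy)⟩

end ControlledPoints

section ApproximateDerivative

open scoped Pointwise

variable {n : ℕ} {f : En n → En n} {L L' : En n →L[ℝ] En n} {x : En n}

theorem volume_lt_norm_div_volume_ball (T : En n →L[ℝ] En n) (c : ℝ) (x : En n) {r : ℝ}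
    (hr : 0 < r) :
    volume {y ∈ ball x r | c * ‖y - x‖ < ‖T (y - x)‖} / volume (ball x r)
      = volume {u ∈ ball 0 1 | c * ‖u‖ < ‖T u‖} / volume (ball (0 : En n) 1) := by
  have hscale : {y ∈ ball x r | c * ‖y - x‖ < ‖T (y - x)‖}
      = x +ᵥ r • {u ∈ ball (0 : En n) 1 | c * ‖u‖ < ‖T u‖} := by
    ext y
    rw [mem_vadd_set_iff_neg_vadd_mem, vadd_eq_add, mem_smul_set_iff_inv_smul_mem₀ hr.ne',
      neg_add_eq_sub]
    simp only [mem_ofPred_eq, mem_ball_iff_norm, sub_zero, map_smul, norm_smul, norm_inv,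
      Real.norm_of_nonneg hr.le, inv_mul_lt_iff₀ hr, mul_one, mul_left_comm c,
      mul_inv_cancel_left₀ hr.ne']
  have hpow : 0 < r ^ n := pow_pos hr n
  rw [hscale, measure_vadd, Measure.addHaar_smul, Measure.addHaar_ball_of_pos _ x hr,
    finrank_euclideanSpace_fin, abs_of_pos hpow, ENNReal.mul_div_mul_left _ _
      (ENNReal.ofReal_pos.2 hpow).ne' ENNReal.ofReal_ne_top]

theorem HasApproxDerivAt.norm_sub_apply_le (h : HasApproxDerivAt f L x)
    (h' : HasApproxDerivAt f L' x) {ε : ℝ} (hε : 0 < ε) {u : En n} (hu : u ∈ ball 0 1) :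
    ‖(L - L') u‖ ≤ 2 * ε * ‖u‖ := by
  set U : Set (En n) := {u ∈ ball 0 1 | 2 * ε * ‖u‖ < ‖(L - L') u‖} with hU
  have hU_open : IsOpen U := isOpen_ball.inter <|
    isOpen_lt (f := fun u => 2 * ε * ‖u‖) (g := fun u => ‖(L - L') u‖) (by fun_prop) (by fun_prop)
  have hsubset (r : ℝ) : {y ∈ ball x r | 2 * ε * ‖y - x‖ < ‖(L - L') (y - x)‖}
      ⊆ {y ∈ ball x r | ε * ‖y - x‖ < ‖f y - f x - L (y - x)‖}
        ∪ {y ∈ ball x r | ε * ‖y - x‖ < ‖f y - f x - L' (y - x)‖} := by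
    rintro y ⟨hy, hlt⟩
    by_contra hcon
    simp only [mem_union, mem_ofPred_eq, hy, true_and, not_or, not_lt] at hcon
    have hdiff : (L - L') (y - x) = (f y - f x - L' (y - x)) - (f y - f x - L (y - x)) := by
      rw [sub_apply, sub_sub_sub_cancel_left]
    have := norm_sub_le (f y - f x - L' (y - x)) (f y - f x - L (y - x))
    rw [← hdiff] at this
    linarith [hcon.1, hcon.2]
  have hdensity : volume U / volume (ball (0 : En n) 1) ≤ 0 + 0 := by
    refine ge_of_tendsto ((h ε hε).add (h' ε hε)) ?_
    filter_upwards [eventually_mem_nhdsWithin] with r hr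
    rw [hU, ← volume_lt_norm_div_volume_ball _ _ x hr, ← ENNReal.add_div]
    gcongr
    exact (measure_mono (hsubset r)).trans (measure_union_le _ _)
  have hU_null : volume U = 0 := by
    simpa [ENNReal.div_eq_zero_iff, measure_ball_lt_top.ne] using hdensity
  by_contra! hlt
  exact notMem_empty u (hU_open.measure_eq_zero_iff volume |>.1 hU_null ▸ ⟨hu, hlt⟩)

theorem HasApproxDerivAt.unique (h : HasApproxDerivAt f L x) (h' : HasApproxDerivAt f L' x) :
    L = L' := by
  refine sub_eq_zero.1 (norm_le_zero_iff.1 (le_of_forall_pos_le_add fun ε hε => ?_))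
  rw [zero_add]
  refine ContinuousLinearMap.opNorm_le_of_ball one_pos hε.le fun u hu => ?_
  simpa [mul_div_cancel₀] using h.norm_sub_apply_le h' (half_pos hε) hu

theorem hasApproxDerivAt_of_hasFDerivWithinAt {S : Set (En n)} (h : HasFDerivWithinAt f L S x)
    (hdensity : Tendsto (fun r => volume (Sᶜ ∩ closedBall x r) / volume (closedBall x r))
      (𝓝[>] 0) (𝓝 0)) :
    HasApproxDerivAt f L x := by
  intro ε hε
  obtain ⟨δ, hδ, hδS⟩ := Metric.eventually_nhds_iff.1
    (eventually_nhdsWithin_iff.1 (h.isLittleO.def hε))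
  refine tendsto_of_tendsto_of_tendsto_of_le_of_le' tendsto_const_nhds hdensity
    (Eventually.of_forall fun _ => zero_le) ?_
  filter_upwards [Ioo_mem_nhdsGT hδ] with r ⟨hr, hrδ⟩
  rw [measure_congr (ball_ae_eq_closedBall_s8 x hr)]
  gcongr
  rintro y ⟨hy, hlt⟩
  exact ⟨fun hyS => hlt.not_ge (hδS ((mem_ball.1 hy).trans hrδ) hyS), ball_subset_closedBall hy⟩

open Classical in
/-- The approximate differential of `f` at `x`, with value `0` where `f` is not approximately
differentiable. -/
def approxFDeriv (f : En n → En n) (x : En n) : En n →L[ℝ] En n :=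
  if h : ∃ L, HasApproxDerivAt f L x then h.choose else 0

theorem HasApproxDerivAt.approxFDeriv_eq (h : HasApproxDerivAt f L x) : approxFDeriv f x = L := by
  have hex : ∃ L, HasApproxDerivAt f L x := ⟨L, h⟩
  rw [approxFDeriv, dif_pos hex]
  exact hex.choose_spec.unique h

end ApproximateDerivative

section CountablyDifferentiable

variable {n : ℕ} {f : En n → En n}

/-- A measurable set of points of approximate differentiability of `f` on which the restriction of
`f` is differentiable in the classical sense, with the approximate differential as derivative. -/
def IsDifferentiabilitySet (f : En n → En n) (S : Set (En n)) : Prop :=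
  MeasurableSet S ∧
    ∀ x ∈ S, HasApproxDerivAt f (approxFDeriv f x) x ∧ HasFDerivWithinAt f (approxFDeriv f x) S x

/-- A countable union of differentiability sets of `f`: the kind of set over which the classical
change of variables formula applies piece by piece. -/
def IsCountablyDifferentiableOn (f : En n → En n) (G : Set (En n)) : Prop :=
  ∃ S : ℕ → Set (En n), (∀ k, IsDifferentiabilitySet f (S k)) ∧ ⋃ k, S k = G

theorem IsDifferentiabilitySet.mono {S T : Set (En n)} (hS : IsDifferentiabilitySet f S)
    (hT : MeasurableSet T) (hTS : T ⊆ S) : IsDifferentiabilitySet f T :=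
  ⟨hT, fun x hx => ⟨(hS.2 x (hTS hx)).1, (hS.2 x (hTS hx)).2.mono hTS⟩⟩

theorem IsDifferentiabilitySet.inter_preimage {S A : Set (En n)} (hS : IsDifferentiabilitySet f S)
    (hA : MeasurableSet A) : IsDifferentiabilitySet f (S ∩ f ⁻¹' A) := by
  refine hS.mono ?_ inter_subset_left
  have hcont : ContinuousOn f S := fun x hx => (hS.2 x hx).2.continuousWithinAt
  rw [← Subtype.image_preimage_coe]
  exact hS.1.subtype_image (hcont.domRestrict.measurable hA)

theorem IsDifferentiabilitySet.isCountablyDifferentiableOn {S : Set (En n)}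
    (hS : IsDifferentiabilitySet f S) : IsCountablyDifferentiableOn f S :=
  ⟨fun _ => S, fun _ => hS, iUnion_const S⟩

theorem IsCountablyDifferentiableOn.iUnion {ι : Type*} [Countable ι] {G : ι → Set (En n)}
    (hG : ∀ i, IsCountablyDifferentiableOn f (G i)) : IsCountablyDifferentiableOn f (⋃ i, G i) := by
  choose S hS hSG using hG
  cases isEmpty_or_nonempty ι
  · exact ⟨fun _ => ∅, fun _ => ⟨MeasurableSet.empty, fun x hx => hx.elim⟩, by simp⟩
  obtain ⟨e, he⟩ := exists_surjective_nat (ι × ℕ)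
  refine ⟨fun k => S (e k).1 (e k).2, fun k => hS _ _, ?_⟩
  rw [he.iUnion_comp fun p => S p.1 p.2, iUnion_prod']
  simp only [hSG]

theorem IsCountablyDifferentiableOn.inter {G s : Set (En n)} (hG : IsCountablyDifferentiableOn f G)
    (hs : MeasurableSet s) : IsCountablyDifferentiableOn f (G ∩ s) := by
  obtain ⟨S, hS, rfl⟩ := hG
  exact ⟨fun k => S k ∩ s, fun k => (hS k).mono ((hS k).1.inter hs) inter_subset_left,
    (iUnion_inter s S).symm⟩

theorem IsCountablyDifferentiableOn.inter_preimage {G A : Set (En n)}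
    (hG : IsCountablyDifferentiableOn f G) (hA : MeasurableSet A) :
    IsCountablyDifferentiableOn f (G ∩ f ⁻¹' A) := by
  obtain ⟨S, hS, rfl⟩ := hG
  exact ⟨fun k => S k ∩ f ⁻¹' A, fun k => (hS k).inter_preimage hA, (iUnion_inter _ S).symm⟩

theorem IsCountablyDifferentiableOn.measurableSet {G : Set (En n)}
    (hG : IsCountablyDifferentiableOn f G) : MeasurableSet G := by
  obtain ⟨S, hS, rfl⟩ := hG
  exact MeasurableSet.iUnion fun k => (hS k).1

theorem IsCountablyDifferentiableOn.hasApproxDerivAt {G : Set (En n)} {x : En n}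
    (hG : IsCountablyDifferentiableOn f G) (hx : x ∈ G) :
    HasApproxDerivAt f (approxFDeriv f x) x := by
  obtain ⟨S, hS, rfl⟩ := hG
  obtain ⟨k, hk⟩ := mem_iUnion.1 hx
  exact ((hS k).2 x hk).1

theorem IsCountablyDifferentiableOn.measurableSet_image {G : Set (En n)}
    (hG : IsCountablyDifferentiableOn f G) (hinj : InjOn f G) : MeasurableSet (f '' G) := by
  obtain ⟨S, hS, rfl⟩ := hG
  rw [image_iUnion]
  exact MeasurableSet.iUnion fun k => measurable_image_of_fderivWithin (hS k).1
    (fun x hx => ((hS k).2 x hx).2) (hinj.mono (subset_iUnion S k))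

theorem IsCountablyDifferentiableOn.lintegral_abs_det_eq_volume_image {G : Set (En n)}
    (hG : IsCountablyDifferentiableOn f G) (hinj : InjOn f G) :
    ∫⁻ x in G, ENNReal.ofReal |(approxFDeriv f x).det| = volume (f '' G) := by
  obtain ⟨S, hS, rfl⟩ := hG
  have hT (k : ℕ) : IsDifferentiabilitySet f (disjointed S k) :=
    (hS k).mono (MeasurableSet.disjointed (fun i => (hS i).1) k) (disjointed_subset S k)
  have hdisj : Pairwise (Function.onFun Disjoint (disjointed S)) := disjoint_disjointed S
  rw [← iUnion_disjointed] at hinj ⊢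
  have hTinj (k : ℕ) : InjOn f (disjointed S k) := hinj.mono (subset_iUnion _ k)
  have himage_disj : Pairwise (Function.onFun Disjoint fun k => f '' disjointed S k) :=
    fun i j hij => by
      rw [Function.onFun, disjoint_iff_inter_eq_empty,
        ← hinj.image_inter (subset_iUnion _ i) (subset_iUnion _ j), (hdisj hij).inter_eq,
        image_empty]
  rw [lintegral_iUnion (fun k => (hT k).1) hdisj, image_iUnion, measure_iUnion himage_disj
    fun k => measurable_image_of_fderivWithin (hT k).1 (fun x hx => ((hT k).2 x hx).2) (hTinj k)]
  exact tsum_congr fun k => lintegral_abs_det_fderiv_eq_addHaar_image volume (hT k).1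
    (fun x hx => ((hT k).2 x hx).2) (hTinj k)

theorem exists_isDifferentiabilitySet_of_lipschitzOnWith {C : ℝ≥0} {S : Set (En n)}
    (hS : MeasurableSet S) (hf : LipschitzOnWith C f S) :
    ∃ T ⊆ S, IsDifferentiabilitySet f T ∧ ∀ᵐ x ∂volume, x ∈ S → x ∈ T := by
  set P : En n → Prop := fun x => x ∈ S →
    HasApproxDerivAt f (approxFDeriv f x) x ∧ HasFDerivWithinAt f (approxFDeriv f x) S x
  have hP : ∀ᵐ x ∂volume, P x := by
    filter_upwards [hf.ae_differentiableWithinAt_of_mem (μ := volume),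
      Besicovitch.ae_tendsto_measure_inter_div_of_measurableSet volume hS.compl]
      with x hdiff hdensity hx
    rw [indicator_of_notMem (notMem_compl_iff.2 hx)] at hdensity
    have hderiv := (hdiff hx).hasFDerivWithinAt
    have happrox := hasApproxDerivAt_of_hasFDerivWithinAt hderiv hdensity
    rw [happrox.approxFDeriv_eq]
    exact ⟨happrox, hderiv⟩
  set N := toMeasurable volume {x | ¬ P x}
  refine ⟨S \ N, sdiff_subset, ⟨hS.diff (measurableSet_toMeasurable _ _), fun x hx => ?_⟩, ?_⟩
  · have hPx : P x := not_not.1 fun h => hx.2 (subset_toMeasurable _ _ h)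
    exact ⟨(hPx hx.1).1, (hPx hx.1).2.mono sdiff_subset⟩
  · have hN : volume N = 0 := (measure_toMeasurable _).trans hP
    filter_upwards [measure_eq_zero_iff_ae_notMem.1 hN] with x hxN hxS using ⟨hxS, hxN⟩

theorem exists_measurableSet_lipschitzOnWith {n m : ℕ} {f : En n → En m} {C : ℝ≥0}
    {P Ω : Set (En n)} (hΩ : MeasurableSet Ω) (hfm : AEStronglyMeasurable f (volume.restrict Ω))
    (hf : LipschitzOnWith C f P) :
    ∃ S ⊆ Ω, MeasurableSet S ∧ (∃ C', LipschitzOnWith C' f S) ∧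
      ∀ᵐ x ∂volume, x ∈ Ω → x ∈ P → x ∈ S := by
  obtain ⟨g, hg, hfg⟩ := hf.extend_finite_dimension
  obtain ⟨T, hTsub, hT, hTae⟩ := (hfm.nullMeasurableSet_eq_fun
    hg.continuous.aestronglyMeasurable).exists_measurable_subset_ae_eq
  have hlip : LipschitzOnWith (lipschitzExtensionConstant (En m) * C) f (Ω ∩ T) :=
    fun x hx y hy => by
      rw [hTsub hx.2, hTsub hy.2]
      exact hg x y
  refine ⟨Ω ∩ T, inter_subset_left, hΩ.inter hT, ⟨_, hlip⟩, ?_⟩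
  filter_upwards [(ae_restrict_iff' hΩ).1 hTae.mem_iff] with x hx hxΩ hxP
  exact ⟨hxΩ, (hx hxΩ).2 (hfg hxP)⟩

theorem exists_isCountablyDifferentiableOn_of_countable_lipschitzOnWith {ι : Type*} [Countable ι]
    {Ω : Set (En n)} {P : ι → Set (En n)} (hΩ : MeasurableSet Ω)
    (hfm : AEStronglyMeasurable f (volume.restrict Ω)) (hP : ∀ i, ∃ C, LipschitzOnWith C f (P i))
    (hcover : ∀ᵐ x ∂volume, x ∈ Ω → ∃ i, x ∈ P i) :
    ∃ G ⊆ Ω, IsCountablyDifferentiableOn f G ∧ ∀ᵐ x ∂volume, x ∈ Ω → x ∈ G := by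
  have hpiece (i : ι) : ∃ T ⊆ Ω, IsDifferentiabilitySet f T ∧
      ∀ᵐ x ∂volume, x ∈ Ω → x ∈ P i → x ∈ T := by
    obtain ⟨C, hC⟩ := hP i
    obtain ⟨S, hSΩ, hS, ⟨C', hC'⟩, hPS⟩ := exists_measurableSet_lipschitzOnWith hΩ hfm hC
    obtain ⟨T, hTS, hT, hST⟩ := exists_isDifferentiabilitySet_of_lipschitzOnWith hS hC'
    exact ⟨T, hTS.trans hSΩ, hT, by filter_upwards [hPS, hST] with x h h' hΩ hP using h' (h hΩ hP)⟩
  choose T hTΩ hT hPT using hpiece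
  refine ⟨⋃ i, T i, iUnion_subset hTΩ,
    .iUnion fun i => (hT i).isCountablyDifferentiableOn, ?_⟩
  filter_upwards [hcover, ae_all_iff.2 hPT] with x hx hxT hxΩ
  obtain ⟨i, hi⟩ := hx hxΩ
  exact mem_iUnion.2 ⟨i, hxT i hxΩ hi⟩

theorem exists_isCountablyDifferentiableOn_of_locally {Ω : Set (En n)}
    (h : ∀ x ∈ Ω, ∃ U ∈ 𝓝 x, U ⊆ Ω ∧
      ∃ G ⊆ U, IsCountablyDifferentiableOn f G ∧ ∀ᵐ y ∂volume, y ∈ U → y ∈ G) :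
    ∃ G ⊆ Ω, IsCountablyDifferentiableOn f G ∧ ∀ᵐ y ∂volume, y ∈ Ω → y ∈ G := by
  choose! U hU hUΩ G hGU hG hUG using h
  obtain ⟨t, htΩ, ht, hcover⟩ :=
    TopologicalSpace.countable_cover_nhdsWithin fun x hx => mem_nhdsWithin_of_mem_nhds (hU x hx)
  have := ht.to_subtype
  refine ⟨⋃ x : t, G x, iUnion_subset fun x => (hGU x (htΩ x.2)).trans (hUΩ x (htΩ x.2)),
    .iUnion fun x => hG x (htΩ x.2), ?_⟩
  filter_upwards [(ae_ball_iff ht).2 fun x hx => hUG x (htΩ hx)] with y hy hyΩ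
  obtain ⟨x, hxt, hyU⟩ := mem_iUnion₂.1 (hcover hyΩ)
  exact mem_iUnion.2 ⟨⟨x, hxt⟩, hy x hxt hyU⟩

end CountablyDifferentiable

section BoundedVariation

variable {n m : ℕ} {Ω : Set (En n)} {ν : Measure (En n)}

theorem IsVariationMeasure.restrict {f : En n → En m} {σ : En n → Fin m → Fin n → ℝ}
    {U : Set (En n)} (hσν : IsVariationMeasure Ω f σ ν) (hU : MeasurableSet U) (hUΩ : U ⊆ Ω) :
    IsVariationMeasure U f σ (ν.restrict U) := by
  obtain ⟨hσ, hσ₁, -, hparts⟩ := hσν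
  refine ⟨hσ, ae_restrict_of_ae hσ₁, by simp [Measure.restrict_apply hU.compl], ?_⟩
  intro φ hφ j i
  have hfderiv {x : En n} (hx : x ∉ U) : fderiv ℝ φ x = 0 :=
    image_eq_zero_of_notMem_tsupport fun h => hx (hφ.2.2 (tsupport_fderiv_subset ℝ h))
  have hleft : ∫ x in U, f x j * fderiv ℝ φ x (EuclideanSpace.single i 1)
      = ∫ x in Ω, f x j * fderiv ℝ φ x (EuclideanSpace.single i 1) := by
    rw [← inter_eq_left.2 hUΩ, ← Measure.restrict_restrict hU]
    refine setIntegral_eq_integral_of_forall_compl_eq_zero fun x hx => ?_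
    rw [hfderiv hx, zero_apply, mul_zero]
  have hright : ∫ x in U, φ x * σ x j i ∂ν = ∫ x, φ x * σ x j i ∂ν := by
    refine setIntegral_eq_integral_of_forall_compl_eq_zero fun x hx => ?_
    rw [image_eq_zero_of_notMem_tsupport fun h => hx (hφ.2.2 h), zero_mul]
  rw [hleft, hright]
  exact hparts φ ⟨hφ.1, hφ.2.1, hφ.2.2.trans hUΩ⟩ j i

theorem IsVariationMeasure.exists_isCountablyDifferentiableOn_of_integrableOn {f : En n → En n}
    {σ : En n → Fin n → Fin n → ℝ} [IsLocallyFiniteMeasure ν] (hΩ : IsOpen Ω)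
    (hσν : IsVariationMeasure Ω f σ ν) (hf : IntegrableOn f Ω) :
    ∃ G ⊆ Ω, IsCountablyDifferentiableOn f G ∧ ∀ᵐ x ∂volume, x ∈ Ω → x ∈ G := by
  let P : ℕ × ℕ → Set (En n) := fun i => controlledPoints Ω f ν i.1 (1 / (i.1 + 1)) ∩
    ball (TopologicalSpace.denseSeq (En n) i.2) (1 / (i.1 + 1) / 4)
  refine exists_isCountablyDifferentiableOn_of_countable_lipschitzOnWith (P := P) hΩ.measurableSet
    hf.aestronglyMeasurable (fun i => ?_) ?_
  · refine hσν.exists_lipschitzOnWith hf i.1.cast_nonneg inter_subset_left fun x hx y hy => ?_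
    have := dist_triangle_right x y (TopologicalSpace.denseSeq (En n) i.2)
    linarith [mem_ball.1 hx.2, mem_ball.1 hy.2]
  · filter_upwards [ae_exists_mem_controlledPoints hΩ hf ν] with x hx hxΩ
    obtain ⟨p, hp⟩ := hx hxΩ
    obtain ⟨q, hq⟩ := (TopologicalSpace.denseRange_denseSeq (En n)).exists_dist_lt x
      (ε := 1 / ((p : ℝ) + 1) / 4) (by positivity)
    exact ⟨(p, q), hp, hq⟩

theorem IsVariationMeasure.exists_isCountablyDifferentiableOn {f : En n → En n}
    {σ : En n → Fin n → Fin n → ℝ} (hΩ : IsOpen Ω) (hσν : IsVariationMeasure Ω f σ ν)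
    (hf : LocallyIntegrableOn f Ω) (hν : ∀ K, IsCompact K → K ⊆ Ω → ν K < ⊤) :
    ∃ G ⊆ Ω, IsCountablyDifferentiableOn f G ∧ ∀ᵐ x ∂volume, x ∈ Ω → x ∈ G := by
  refine exists_isCountablyDifferentiableOn_of_locally fun x hx => ?_
  obtain ⟨r, hr, hrΩ⟩ := nhds_basis_closedBall.mem_iff.1 (hΩ.mem_nhds hx)
  have hcompact := isCompact_closedBall x r
  have : IsFiniteMeasure (ν.restrict (ball x r)) := isFiniteMeasure_restrict.2
    ((measure_mono ball_subset_closedBall).trans_lt (hν _ hcompact hrΩ)).ne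
  exact ⟨ball x r, ball_mem_nhds x hr, ball_subset_closedBall.trans hrΩ,
    (hσν.restrict measurableSet_ball (ball_subset_closedBall.trans hrΩ)
      ).exists_isCountablyDifferentiableOn_of_integrableOn isOpen_ball
      ((hf.integrableOn_compact_subset hrΩ hcompact).mono_set ball_subset_closedBall)⟩

end BoundedVariation

section ChangeOfVariables

variable {n : ℕ} {f : En n → En n} {G A : Set (En n)} {C : ℝ}

theorem measurable_frobNorm_mul {α : Type*} [MeasurableSpace α] {m n : ℕ}
    {σ : α → Fin m → Fin n → ℝ} {w : α → ℝ} (hσ : Measurable σ) (hw : Measurable w) :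
    Measurable fun x => frobNorm fun j i => σ x j i * w x := by
  unfold frobNorm
  fun_prop

theorem IsCountablyDifferentiableOn.setLIntegral_mul_abs_det_eq
    (hG : IsCountablyDifferentiableOn f G) (hinj : InjOn f G) (hC : 0 ≤ C) :
    ∫⁻ x in G, ENNReal.ofReal (C * |(approxFDeriv f x).det|)
      = ENNReal.ofReal C * volume (f '' G) := by
  simp only [ENNReal.ofReal_mul hC]
  rw [lintegral_const_mul' _ _ ENNReal.ofReal_ne_top, hG.lintegral_abs_det_eq_volume_image hinj]

theorem IsCountablyDifferentiableOn.ae_le_of_setLIntegral_preimage_le {D : En n → ℝ}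
    (hG : IsCountablyDifferentiableOn f G) (hinj : InjOn f G) (hC : 0 ≤ C) (hD : Measurable D)
    (h : ∀ A ⊆ f '' G, MeasurableSet A →
      ∫⁻ x in f ⁻¹' A ∩ G, ENNReal.ofReal (D x) ≤ ENNReal.ofReal C * volume A) :
    ∀ᵐ x ∂volume.restrict G, D x ≤ C * |(approxFDeriv f x).det| := by
  suffices hle : (fun x => ENNReal.ofReal (D x)) ≤ᵐ[volume.restrict G]
      fun x => ENNReal.ofReal (C * |(approxFDeriv f x).det|) by
    filter_upwards [hle] with x hx
    exact (ENNReal.ofReal_le_ofReal_iff (by positivity)).1 hx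
  refine ae_le_of_forall_setLIntegral_le_of_sigmaFinite hD.ennreal_ofReal fun s hs _ => ?_
  have hGs := hG.inter hs
  have hinj_s : InjOn f (G ∩ s) := hinj.mono inter_subset_left
  rw [Measure.restrict_restrict hs, inter_comm, hGs.setLIntegral_mul_abs_det_eq hinj_s hC]
  refine le_trans (lintegral_mono_set fun x hx => ?_)
    (h _ (image_mono inter_subset_left) (hGs.measurableSet_image hinj_s))
  exact ⟨mem_image_of_mem f hx, hx.1⟩

theorem IsCountablyDifferentiableOn.setLIntegral_preimage_le {D : En n → ℝ}
    (hG : IsCountablyDifferentiableOn f G) (hinj : InjOn f G) (hC : 0 ≤ C)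
    (h : ∀ᵐ x ∂volume.restrict G, D x ≤ C * |(approxFDeriv f x).det|) (hA : MeasurableSet A) :
    ∫⁻ x in G ∩ f ⁻¹' A, ENNReal.ofReal (D x) ≤ ENNReal.ofReal C * volume A := by
  calc ∫⁻ x in G ∩ f ⁻¹' A, ENNReal.ofReal (D x)
      ≤ ∫⁻ x in G ∩ f ⁻¹' A, ENNReal.ofReal (C * |(approxFDeriv f x).det|) :=
        lintegral_mono_ae <| ae_restrict_of_ae_restrict_of_subset inter_subset_left <|
          h.mono fun x hx => ENNReal.ofReal_le_ofReal hx
    _ = ENNReal.ofReal C * volume (f '' (G ∩ f ⁻¹' A)) :=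
        (hG.inter_preimage hA).setLIntegral_mul_abs_det_eq (hinj.mono inter_subset_left) hC
    _ ≤ ENNReal.ofReal C * volume A := by
        gcongr
        exact (image_mono inter_subset_right).trans (image_preimage_subset f A)

end ChangeOfVariables

section Equivalence

theorem IsCountablyDifferentiableOn.ae_forall_hasApproxDerivAt_iff {n : ℕ} {f : En n → En n}
    {G : Set (En n)} (hG : IsCountablyDifferentiableOn f G)
    {p : En n → (En n →L[ℝ] En n) → Prop} :
    (∀ᵐ x ∂volume.restrict G, ∀ L, HasApproxDerivAt f L x → p x L)
      ↔ ∀ᵐ x ∂volume.restrict G, p x (approxFDeriv f x) := by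
  refine eventually_congr ?_
  filter_upwards [ae_restrict_mem hG.measurableSet] with x hx
  exact ⟨fun h => h _ (hG.hasApproxDerivAt hx), fun h L hL => hL.approxFDeriv_eq ▸ h⟩

theorem abs_cont_part_bound_iff_pointwise_general {n : ℕ} {Ω₁ Ω₂ : Set (En n)} (hΩ₁ : IsOpen Ω₁)
    {f : En n → En n} (hmaps : MapsTo f Ω₁ Ω₂) (hinj : InjOn f Ω₁)
    {σ : En n → Fin n → Fin n → ℝ} {ν : Measure (En n)} (hint : LocallyIntegrableOn f Ω₁)
    (hfin : ∀ K, IsCompact K → K ⊆ Ω₁ → ν K < ⊤) (hσν : IsVariationMeasure Ω₁ f σ ν)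
    {C₁ : ℝ} (hC₁ : 0 ≤ C₁) :
    (∀ A : Set (En n), A ⊆ Ω₂ → MeasurableSet A →
        ∫⁻ x in f ⁻¹' A ∩ Ω₁,
            ENNReal.ofReal (frobNorm fun j i => σ x j i * (ν.rnDeriv volume x).toReal)
          ≤ ENNReal.ofReal C₁ * volume A)
      ↔ ∀ᵐ x ∂volume.restrict Ω₁, ∀ L : En n →L[ℝ] En n, HasApproxDerivAt f L x →
          frobNorm (fun j i => σ x j i * (ν.rnDeriv volume x).toReal) ≤ C₁ * |L.det| := by
  obtain ⟨G, hGΩ, hG, hcover⟩ := hσν.exists_isCountablyDifferentiableOn hΩ₁ hint hfin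
  have hGΩ_ae : G =ᵐ[volume] Ω₁ := hGΩ.eventuallyLE.antisymm hcover
  have hinj_G : InjOn f G := hinj.mono hGΩ
  rw [← Measure.restrict_congr_set hGΩ_ae, hG.ae_forall_hasApproxDerivAt_iff]
  constructor
  · intro h
    have hmeas := measurable_frobNorm_mul hσν.1 (ν.measurable_rnDeriv volume).ennreal_toReal
    exact hG.ae_le_of_setLIntegral_preimage_le hinj_G hC₁ hmeas fun A hA hA_meas =>
      (lintegral_mono_set (inter_subset_inter_right _ hGΩ)).trans
        (h A (hA.trans (hmaps.mono_left hGΩ).image_subset) hA_meas)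
  · intro h A _ hA_meas
    have hpreimage : (f ⁻¹' A ∩ G : Set (En n)) =ᵐ[volume] (f ⁻¹' A ∩ Ω₁ : Set (En n)) :=
      ae_eq_set_inter ae_eq_rfl hGΩ_ae
    rw [← setLIntegral_congr hpreimage, inter_comm]
    exact hG.setLIntegral_preimage_le hinj_G hC₁ h hA_meas

end Equivalence

/-- **Lemma (Statement 8).** For a homeomorphism `f : Ω₁ → Ω₂` of bounded variation with
polar decomposition `Df = σ ⬝ ν`, the bound `∫_{f⁻¹(A)} |D^a f| dLⁿ ≤ C₁·Lⁿ(A)` for all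
Borel `A ⊆ Ω₂` is equivalent to the pointwise bound `|D^a f(x)| ≤ C₁·|J_f(x)|` a.e. in
`Ω₁`, where `D^a f = σ · (dν/dLⁿ)` and `J_f` is the Jacobian of the approximate
differential of `f`. -/
theorem abs_cont_part_bound_iff_pointwise {n : ℕ}
    (Ω₁ Ω₂ : Set (En n)) (hΩ₁ : IsOpen Ω₁) (hΩ₂ : IsOpen Ω₂)
    (f g : En n → En n) (hf : IsHomeoOn f g Ω₁ Ω₂)
    (σ : En n → Fin n → Fin n → ℝ) (ν : Measure (En n))
    (hint : IntegrableOn f Ω₁ volume) (hfin : ν Ω₁ < ⊤)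
    (hσν : IsVariationMeasure Ω₁ f σ ν)
    (C₁ : ℝ) (hC₁ : 0 < C₁) :
    (∀ A : Set (En n), A ⊆ Ω₂ → MeasurableSet A →
        ∫⁻ x in f ⁻¹' A ∩ Ω₁,
            ENNReal.ofReal
              (frobNorm fun j i => σ x j i * (ν.rnDeriv volume x).toReal) ∂volume
          ≤ ENNReal.ofReal C₁ * volume A)
      ↔ (∀ᵐ x ∂volume.restrict Ω₁, ∀ L : En n →L[ℝ] En n, HasApproxDerivAt f L x →
          frobNorm (fun j i => σ x j i * (ν.rnDeriv volume x).toReal) ≤ C₁ * |L.det|) := by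
  have hinj : InjOn f Ω₁ := LeftInvOn.injOn hf.2.2.2.2.1
  exact abs_cont_part_bound_iff_pointwise_general hΩ₁ hf.2.2.1 hinj hint.locallyIntegrableOn
    (fun _ _ hK => (measure_mono hK).trans_lt hfin) hσν hC₁.le
end
end
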